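/- arXiv:1810.08952 — 4 statements merged into one kernel-verified Lean document; each statement's English description precedes it below -/
import Mathlib

section
/- Let n ≥ 1, 1 ≤ p < ∞, and 0 < α < β < n. Let B := B(0, e^{-2/β}) ⊂ ℝ^n and define f : ℝ^n → ℝ by f(y) := ( χ_B(y) / ( |y|^β · |ln|y||² ) )^{1/p}. Then f ∈ S_{p,β}(ℝ^n) but f ∉ S_{p,α}(ℝ^n); in particular the inclusion S_{p,α} ⊆ S_{p,β} is proper. -/
open MeasureTheory Metric Filter Set ENNReal

noncomputable section

/-- Euclidean space ℝ^n. -/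
abbrev Euc (n : ℕ) := EuclideanSpace ℝ (Fin n)

/-- Stummel p-modulus with general weight Ψ:
`η_{p,Ψ}f(r) = sup_x ( ∫_{|x-y|<r} |f(y)|^p Ψ(|x-y|)/|x-y|^n dy )^{1/p}`. -/
noncomputable def stummelMod (n : ℕ) (p : ℝ) (Ψ : ℝ → ℝ) (f : Euc n → ℝ) (r : ℝ) : ℝ≥0∞ :=
  ⨆ x : Euc n,
    (∫⁻ y in ball x r,
        ENNReal.ofReal (|f y| ^ p * Ψ (dist x y) / dist x y ^ (n : ℝ))) ^ (1 / p)

/-- Stummel p-modulus with power weight Ψ(t) = t^α: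
`η_{p,α}f(r) = sup_x ( ∫_{|x-y|<r} |f(y)|^p / |x-y|^{n-α} dy )^{1/p}`. -/
noncomputable def stummelModA (n : ℕ) (p α : ℝ) (f : Euc n → ℝ) (r : ℝ) : ℝ≥0∞ :=
  ⨆ x : Euc n,
    (∫⁻ y in ball x r,
        ENNReal.ofReal (|f y| ^ p / dist x y ^ ((n : ℝ) - α))) ^ (1 / p)

/-- f ∈ L^p_loc(ℝ^n). -/
def MemLocLp (n : ℕ) (p : ℝ) (f : Euc n → ℝ) : Prop :=
  LocallyIntegrable (fun y => |f y| ^ p) volume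

/-- The generalized Stummel p-class `S_{p,Ψ}`. -/
def MemStummel (n : ℕ) (p : ℝ) (Ψ : ℝ → ℝ) (f : Euc n → ℝ) : Prop :=
  MemLocLp n p f ∧ (∀ r > 0, stummelMod n p Ψ f r < ⊤) ∧
    Tendsto (stummelMod n p Ψ f) (nhdsWithin 0 (Ioi 0)) (nhds 0)

/-- The Stummel p-class `S_{p,α}` (power weight). -/
def MemStummelA (n : ℕ) (p α : ℝ) (f : Euc n → ℝ) : Prop :=
  MemLocLp n p f ∧ (∀ r > 0, stummelModA n p α f r < ⊤) ∧
    Tendsto (stummelModA n p α f) (nhdsWithin 0 (Ioi 0)) (nhds 0)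

/-- The bounded Stummel modulus class `S̃_{p,α}`. -/
def MemStummelBddA (n : ℕ) (p α : ℝ) (f : Euc n → ℝ) : Prop :=
  MemLocLp n p f ∧ ∀ r > 0, stummelModA n p α f r < ⊤

/-- Generalized Morrey norm `‖f‖_{L^{p,Ψ}}`. -/
noncomputable def morreyNorm (n : ℕ) (p : ℝ) (Ψ : ℝ → ℝ) (f : Euc n → ℝ) : ℝ≥0∞ :=
  ⨆ (x : Euc n) (r : ℝ) (_ : 0 < r),
    (volume (ball x r))⁻¹ ^ (1 / p) * ENNReal.ofReal (Ψ r)⁻¹ *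
      (∫⁻ y in ball x r, ENNReal.ofReal (|f y| ^ p)) ^ (1 / p)

/-- The generalized Morrey space `L^{p,Ψ}`. -/
def MemMorrey (n : ℕ) (p : ℝ) (Ψ : ℝ → ℝ) (f : Euc n → ℝ) : Prop :=
  MemLocLp n p f ∧ morreyNorm n p Ψ f < ⊤

/-- Classical Morrey norm `‖f‖_{L^{p,λ}}`. -/
noncomputable def morreyNormC (n : ℕ) (p lam : ℝ) (f : Euc n → ℝ) : ℝ≥0∞ :=
  ⨆ (x : Euc n) (r : ℝ) (_ : 0 < r),
    ENNReal.ofReal (r ^ (-(lam / p))) *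
      (∫⁻ y in ball x r, ENNReal.ofReal (|f y| ^ p)) ^ (1 / p)

/-- The classical Morrey space `L^{p,λ}`. -/
def MemMorreyC (n : ℕ) (p lam : ℝ) (f : Euc n → ℝ) : Prop :=
  MemLocLp n p f ∧ morreyNormC n p lam f < ⊤

/-- Generalized weak Morrey norm `‖f‖_{wL^{p,Ψ}}`. -/
noncomputable def weakMorreyNorm (n : ℕ) (p : ℝ) (Ψ : ℝ → ℝ) (f : Euc n → ℝ) : ℝ≥0∞ :=
  ⨆ (x : Euc n) (r : ℝ) (_ : 0 < r) (t : ℝ) (_ : 0 < t),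
    ENNReal.ofReal t * (volume {y ∈ ball x r | t < |f y|}) ^ (1 / p) /
      (ENNReal.ofReal (Ψ r) * (volume (ball x r)) ^ (1 / p))

/-- The generalized weak Morrey space `wL^{p,Ψ}`. -/
def MemWeakMorrey (n : ℕ) (p : ℝ) (Ψ : ℝ → ℝ) (f : Euc n → ℝ) : Prop :=
  Measurable f ∧ weakMorreyNorm n p Ψ f < ⊤

/-- Classical weak Morrey norm `‖f‖_{wL^{p,λ}}`. -/
noncomputable def weakMorreyNormC (n : ℕ) (p lam : ℝ) (f : Euc n → ℝ) : ℝ≥0∞ :=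
  ⨆ (x : Euc n) (r : ℝ) (_ : 0 < r) (t : ℝ) (_ : 0 < t),
    ENNReal.ofReal (r ^ (-(lam / p))) * ENNReal.ofReal t *
      (volume {y ∈ ball x r | t < |f y|}) ^ (1 / p)

/-- The classical weak Morrey space `wL^{p,λ}`. -/
def MemWeakMorreyC (n : ℕ) (p lam : ℝ) (f : Euc n → ℝ) : Prop :=
  Measurable f ∧ weakMorreyNormC n p lam f < ⊤

/-- Decreasing rearrangement `f*(t) = inf{σ > 0 : |{|f| > σ}| ≤ t}`. -/
noncomputable def rearrangement (n : ℕ) (f : Euc n → ℝ) (t : ℝ) : ℝ :=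
  sInf {σ : ℝ | 0 < σ ∧ volume {x : Euc n | σ < |f x|} ≤ ENNReal.ofReal t}

/-- Lorentz norm `‖f‖_{L^p_κ} = ( ∫₀^∞ (t^{1/κ} f*(t))^p dt/t )^{1/p}`. -/
noncomputable def lorentzNorm (n : ℕ) (kappa p : ℝ) (f : Euc n → ℝ) : ℝ≥0∞ :=
  (∫⁻ t in Ioi (0 : ℝ),
      ENNReal.ofReal ((t ^ (1 / kappa) * rearrangement n f t) ^ p / t)) ^ (1 / p)

/-- The Lorentz space `L^p_κ`. -/
def MemLorentz (n : ℕ) (kappa p : ℝ) (f : Euc n → ℝ) : Prop :=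
  Measurable f ∧ lorentzNorm n kappa p f < ⊤

end

/-!
For a radial `f` with `|f y|^p = g ‖y‖`, `g` nonincreasing, membership in `S_{p,γ}` is decided at
the origin: of the two factors of `g ‖y‖ |x-y|^{γ-n}`, the first only grows when `y` is replaced by
`x-y` if `|x-y| ≤ |y|`, and the second only grows when `x-y` is replaced by `y` otherwise. So the
Stummel integral centred at `x` is at most twice the one centred at `0`, and `f ∈ S_{p,γ}` iff
`g ‖y‖ |y|^{γ-n}` is locally integrable. For the logarithmic example this last function is
`1 / (|y|^{n+β-γ} log² |y|)` near `0`, which by polar coordinates and the integrability of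
`1 / (s log² s)` at `0` is integrable iff `β ≤ γ`. The radius `e^{-2/β}` is where
`s^β log² s` stops increasing.
-/

open scoped Topology

section RadialIntegrals

lemma tendsto_setLIntegral_ball_nhdsGT_zero {X : Type*} [MetricSpace X] [MeasurableSpace X]
    [OpensMeasurableSpace X] {μ : Measure X} [NullSingletonClass μ] {f : X → ℝ≥0∞} {x : X}
    (hf : ∃ r > 0, ∫⁻ y in ball x r, f y ∂μ ≠ ∞) :
    Tendsto (fun r => ∫⁻ y in ball x r, f y ∂μ) (𝓝[>] 0) (𝓝 0) := by
  have h := tendsto_measure_biInter_gt (μ := μ.withDensity f) (s := ball x) (a := 0)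
    (fun _ _ => measurableSet_ball.nullMeasurableSet) (fun _ _ _ hij => ball_subset_ball hij)
    (by simpa only [withDensity_apply _ measurableSet_ball] using hf)
  rw [biInter_gt_ball, closedBall_zero, measure_singleton] at h
  simpa only [Function.comp_def, withDensity_apply _ measurableSet_ball] using h

lemma locallyIntegrable_indicator_ball_iff {X F : Type*} [PseudoMetricSpace X] [ProperSpace X]
    [MeasurableSpace X] [OpensMeasurableSpace X] [NormedAddCommGroup F] {μ : Measure X}
    {f : X → F} {x : X} {r : ℝ} :
    LocallyIntegrable ((ball x r).indicator f) μ ↔ IntegrableOn f (ball x r) μ := by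
  refine ⟨fun h => ?_, fun h => (h.integrable_indicator measurableSet_ball).locallyIntegrable⟩
  have h_ball := (h.integrableOn_isCompact (isCompact_closedBall x r)).mono_set
    ball_subset_closedBall
  exact h_ball.congr_fun (fun _ hy => indicator_of_mem hy f) measurableSet_ball

variable {E : Type*} [NormedAddCommGroup E] [MeasurableSpace E] [BorelSpace E]
  {μ : Measure E} [μ.IsAddLeftInvariant] [μ.IsNegInvariant]

lemma setLIntegral_ball_dist (h : ℝ → ℝ≥0∞) (x : E) (r : ℝ) :
    ∫⁻ y in ball x r, h (dist x y) ∂μ = ∫⁻ y in ball 0 r, h ‖y‖ ∂μ := by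
  rw [← lintegral_indicator measurableSet_ball, ← lintegral_indicator measurableSet_ball,
    ← lintegral_sub_left_eq_self _ x]
  congr! 2 with y
  simp only [indicator, mem_ball', dist_eq_norm, sub_sub_self, zero_sub, norm_neg]

lemma setLIntegral_ball_mul_dist_le_two_mul [NullSingletonClass μ] {g k : ℝ → ℝ≥0∞}
    (hg : AntitoneOn g (Ioi 0)) (hk : AntitoneOn k (Ioi 0)) (x : E) (r : ℝ) :
    ∫⁻ y in ball x r, g ‖y‖ * k (dist x y) ∂μ ≤ 2 * ∫⁻ y in ball 0 r, g ‖y‖ * k ‖y‖ ∂μ := by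
  have h_closer : MeasurableSet {y : E | ‖y‖ ≤ dist x y} :=
    (isClosed_le continuous_norm (continuous_const.dist continuous_id)).measurableSet
  have h_ne (z : E) : ∀ᵐ y ∂μ, y ≠ z := by simp [ae_iff]
  rw [← lintegral_inter_add_sdiff _ (ball x r) h_closer, two_mul]
  gcongr ?_ + ?_
  · calc
      _ ≤ ∫⁻ y in ball x r ∩ {y | ‖y‖ ≤ dist x y}, g ‖y‖ * k ‖y‖ ∂μ := by
        refine setLIntegral_mono_ae' (measurableSet_ball.inter h_closer) ?_
        filter_upwards [h_ne 0] with y hy0 ⟨_, hyx⟩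
        have hy_pos : 0 < ‖y‖ := norm_pos_iff.2 hy0
        gcongr
        exact hk hy_pos (hy_pos.trans_le hyx) hyx
      _ ≤ _ := lintegral_mono_set fun y ⟨hy, hyx⟩ =>
        mem_ball_zero_iff.2 (hyx.trans_lt (mem_ball'.1 hy))
  · calc
      _ ≤ ∫⁻ y in ball x r \ {y | ‖y‖ ≤ dist x y}, g (dist x y) * k (dist x y) ∂μ := by
        refine setLIntegral_mono_ae' (measurableSet_ball.diff h_closer) ?_
        filter_upwards [h_ne x] with y hyx ⟨_, hy⟩
        have hy_pos : 0 < dist x y := dist_pos.2 hyx.symm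
        have hy_lt : dist x y < ‖y‖ := not_le.1 hy
        gcongr
        exact hg hy_pos (hy_pos.trans hy_lt) hy_lt.le
      _ ≤ ∫⁻ y in ball x r, g (dist x y) * k (dist x y) ∂μ := lintegral_mono_set sdiff_subset
      _ = _ := setLIntegral_ball_dist (fun s => g s * k s) x r

end RadialIntegrals

section RadialStummel

variable {n : ℕ} {p γ : ℝ} {f : Euc n → ℝ}

lemma MemStummelA.locallyIntegrable (hp : 0 < p) (hf : MemStummelA n p γ f) (x : Euc n) :
    LocallyIntegrable (fun y => |f y| ^ p / dist x y ^ ((n : ℝ) - γ)) := by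
  obtain ⟨hloc, hfin, -⟩ := hf
  refine locallyIntegrable_iff.2 fun K hK => ?_
  obtain ⟨r, hr, hKr⟩ := hK.isBounded.subset_ball_lt 0 x
  have hmod : (∫⁻ y in ball x r, ENNReal.ofReal (|f y| ^ p / dist x y ^ ((n : ℝ) - γ))) ^ (1 / p)
      < ∞ := lt_of_le_of_lt (le_iSup (α := ℝ≥0∞) _ x) (hfin r hr)
  rw [ENNReal.rpow_lt_top_iff_of_pos (by positivity)] at hmod
  refine IntegrableOn.mono_set ⟨?_, ?_⟩ hKr
  · have hdist : Measurable fun y => dist x y ^ ((n : ℝ) - γ) := by fun_prop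
    exact (hloc.aestronglyMeasurable.aemeasurable.div
      hdist.aemeasurable).aestronglyMeasurable.restrict
  · rwa [hasFiniteIntegral_iff_ofReal (ae_of_all _ fun y => by positivity)]

variable {g : ℝ → ℝ}

lemma stummelModA_le_of_antitoneOn [NeZero n] (hp : 0 < p) (hγ : γ ≤ n)
    (hg : AntitoneOn g (Ioi 0)) (hfg : ∀ y, |f y| ^ p = g ‖y‖) (r : ℝ) :
    stummelModA n p γ f r ≤
      (2 * ∫⁻ y in ball (0 : Euc n) r, ENNReal.ofReal (g ‖y‖ / ‖y‖ ^ ((n : ℝ) - γ))) ^ (1 / p) := by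
  have hg_nonneg (y : Euc n) : 0 ≤ g ‖y‖ := by rw [← hfg]; positivity
  have hk : AntitoneOn (fun s : ℝ => ENNReal.ofReal (s ^ ((n : ℝ) - γ))⁻¹) (Ioi 0) := by
    intro s hs t _ hst
    have hs : 0 < s := hs
    dsimp only
    gcongr
  have hsup (x : Euc n) := setLIntegral_ball_mul_dist_le_two_mul (μ := volume)
    (ENNReal.ofReal_mono.comp_antitoneOn hg) hk x r
  simp only [Function.comp_apply, ← ENNReal.ofReal_mul (hg_nonneg _), ← div_eq_mul_inv] at hsup
  simp only [stummelModA, hfg]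
  exact iSup_le fun x => ENNReal.rpow_le_rpow (hsup x) (by positivity)

theorem memStummelA_iff_locallyIntegrable_of_antitoneOn [NeZero n] (hp : 0 < p) (hγ : γ ≤ n)
    (hg : AntitoneOn g (Ioi 0)) (hfg : ∀ y, |f y| ^ p = g ‖y‖) :
    MemStummelA n p γ f ↔
      LocallyIntegrable (fun y : Euc n => g ‖y‖ / ‖y‖ ^ ((n : ℝ) - γ)) := by
  refine ⟨fun hf => by simpa only [dist_zero_left, hfg] using hf.locallyIntegrable hp 0,
    fun hw => ?_⟩
  have hball (r : ℝ) : ∫⁻ y in ball (0 : Euc n) r,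
      ENNReal.ofReal (g ‖y‖ / ‖y‖ ^ ((n : ℝ) - γ)) ≠ ∞ :=
    (((hw.integrableOn_isCompact (isCompact_closedBall 0 r)).mono_set
      ball_subset_closedBall).lintegral_lt_top).ne
  have hmod := stummelModA_le_of_antitoneOn hp hγ hg hfg
  refine ⟨?_, fun r _ => ?_, ?_⟩
  · have hkernel : Continuous fun y : Euc n => ‖y‖ ^ ((n : ℝ) - γ) :=
      continuous_norm.rpow_const fun _ => Or.inr (sub_nonneg.2 hγ)
    refine (locallyIntegrable_congr ?_).1 (hw.mul_continuous hkernel)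
    filter_upwards [(by simp [ae_iff] : ∀ᵐ y : Euc n, y ≠ 0)] with y hy
    rw [hfg, div_mul_cancel₀ _ (Real.rpow_pos_of_pos (norm_pos_iff.2 hy) _).ne']
  · exact (hmod r).trans_lt (ENNReal.rpow_lt_top_of_nonneg (by positivity)
      (ENNReal.mul_ne_top ENNReal.ofNat_ne_top (hball r)))
  · have hlim := (ENNReal.Tendsto.const_mul
      (tendsto_setLIntegral_ball_nhdsGT_zero ⟨1, one_pos, hball 1⟩)
      (Or.inr (ENNReal.ofNat_ne_top (n := 2)))).ennrpow_const (1 / p)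
    rw [mul_zero, ENNReal.zero_rpow_of_pos (by positivity)] at hlim
    exact tendsto_of_tendsto_of_tendsto_of_le_of_le tendsto_const_nhds hlim
      (fun _ => zero_le) hmod

end RadialStummel

section LogKernel

/-- The radial profile `s ↦ 1 / (s^a |log s|²)` of the example, for `0 < s < 1`. At `s = 0` it is
`0`, because `Real.log 0 = 0`. -/
noncomputable def logKernel (a s : ℝ) : ℝ := 1 / (s ^ a * |Real.log s| ^ 2)

lemma logKernel_nonneg (a : ℝ) {s : ℝ} (hs : 0 ≤ s) : 0 ≤ logKernel a s := by
  unfold logKernel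
  positivity

lemma measurable_logKernel (a : ℝ) : Measurable (logKernel a) := by
  unfold logKernel
  fun_prop

lemma logKernel_div_rpow (a b : ℝ) {s : ℝ} (hs : 0 ≤ s) :
    logKernel a s / s ^ b = logKernel (a + b) s := by
  rcases hs.eq_or_lt with rfl | hs
  · simp [logKernel]
  · rw [logKernel, logKernel, Real.rpow_add hs, div_div]
    ring

lemma logKernel_le_logKernel {a b s : ℝ} (hab : a ≤ b) (hs : s ∈ Ioo 0 1) :
    logKernel a s ≤ logKernel b s := by
  obtain ⟨hs0, hs1⟩ := hs
  have hlog : Real.log s ≠ 0 := (Real.log_neg hs0 hs1).ne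
  unfold logKernel
  exact one_div_le_one_div_of_le (by positivity) (mul_le_mul_of_nonneg_right
    (Real.rpow_le_rpow_of_exponent_ge hs0 hs1.le hab) (by positivity))

lemma antitoneOn_logKernel {a : ℝ} (ha : 0 < a) :
    AntitoneOn (logKernel a) (Ioc 0 (Real.exp (-2 / a))) := by
  have hsq {s : ℝ} (hs : 0 < s) :
      logKernel a s = ((Real.log s⁻¹ / s⁻¹ ^ (a / 2)) ^ 2)⁻¹ := by
    rw [logKernel, Real.log_inv, Real.inv_rpow hs.le, div_inv_eq_mul, mul_pow, neg_sq, sq_abs,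
      ← Real.rpow_mul_natCast hs.le, Nat.cast_ofNat, div_mul_cancel₀ a two_ne_zero, one_div,
      mul_comm]
  have hinv {s : ℝ} (hs : s ∈ Ioc 0 (Real.exp (-2 / a))) : Real.exp (a / 2)⁻¹ ≤ s⁻¹ := by
    rw [le_inv_comm₀ (Real.exp_pos _) hs.1, ← Real.exp_neg, inv_div, ← neg_div]
    exact hs.2
  intro s hs t ht hst
  have hlog : 0 < Real.log s⁻¹ := Real.log_pos
    ((Real.one_lt_exp_iff.2 (by positivity)).trans_le (hinv hs))
  have hquot : 0 < Real.log s⁻¹ / s⁻¹ ^ (a / 2) :=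
    div_pos hlog (Real.rpow_pos_of_pos (inv_pos.2 hs.1) _)
  have hmono := Real.log_div_self_rpow_antitoneOn (half_pos ha) (hinv ht) (hinv hs)
    (inv_anti₀ hs.1 hst)
  rw [hsq hs.1, hsq ht.1]
  gcongr

lemma integrableOn_logKernel_one {R : ℝ} (hR : R < 1) : IntegrableOn (logKernel 1) (Ioc 0 R) := by
  refine intervalIntegral.integrableOn_deriv_of_nonneg (g := fun s => -(Real.log s)⁻¹)
    (fun s hs => ?_) (fun s hs => ?_) (fun s hs => logKernel_nonneg 1 hs.1.le)
  · -- The primitive tends to `0` at `0`, and this is also its junk value there.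
    rcases hs.1.eq_or_lt with rfl | hs0
    · refine (continuousAt_iff_punctured_nhds.2 ?_).continuousWithinAt
      simpa using (tendsto_inv_atBot_zero.comp Real.tendsto_log_nhdsNE_zero).neg
    · have hlog : Real.log s ≠ 0 := (Real.log_neg hs0 (hs.2.trans_lt hR)).ne
      exact ((Real.continuousAt_log hs0.ne').inv₀ hlog).neg.continuousWithinAt
  · have hlog : Real.log s ≠ 0 := (Real.log_neg hs.1 (hs.2.trans hR)).ne
    have hderiv : logKernel 1 s = -(-s⁻¹ / Real.log s ^ 2) := by
      rw [logKernel, Real.rpow_one, sq_abs]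
      field_simp
    rw [hderiv]
    exact ((Real.hasDerivAt_log hs.1.ne').inv hlog).neg

lemma inv_le_mul_logKernel {a s : ℝ} (ha : 1 < a) (hs : s ∈ Ioo 0 1) :
    s⁻¹ ≤ (2 / (a - 1)) ^ 2 * logKernel a s := by
  obtain ⟨hs0, hs1⟩ := hs
  have hlog : Real.log s ≠ 0 := (Real.log_neg hs0 hs1).ne
  have hε : 0 < (a - 1) / 2 := by linarith
  have hlog_lt := Real.abs_log_mul_self_rpow_lt s ((a - 1) / 2) hs0 hs1.le hε
  rw [one_div_div] at hlog_lt
  rw [logKernel, mul_one_div, le_div_iff₀ (by positivity)]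
  calc s⁻¹ * (s ^ a * |Real.log s| ^ 2) = |Real.log s * s ^ ((a - 1) / 2)| ^ 2 := by
        rw [sq_abs, sq_abs, mul_pow, ← Real.rpow_mul_natCast hs0.le, Nat.cast_ofNat,
          div_mul_cancel₀ _ two_ne_zero, Real.rpow_sub_one hs0.ne']
        ring
    _ ≤ (2 / (a - 1)) ^ 2 := by gcongr

lemma integrableOn_Ioo_logKernel_iff {a R : ℝ} (hR0 : 0 < R) (hR1 : R < 1) :
    IntegrableOn (logKernel a) (Ioo 0 R) ↔ a ≤ 1 := by
  have hsub {s : ℝ} (hs : s ∈ Ioo 0 R) : s ∈ Ioo 0 1 := ⟨hs.1, hs.2.trans hR1⟩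
  refine ⟨fun h => ?_, fun ha => ?_⟩
  · by_contra! ha
    refine lt_irrefl (-1 : ℝ) ((intervalIntegral.integrableOn_Ioo_rpow_iff hR0).1 ?_)
    refine (h.const_mul ((2 / (a - 1)) ^ 2)).mono' (by fun_prop) ?_
    refine ae_restrict_of_forall_mem measurableSet_Ioo fun s hs => ?_
    rw [Real.rpow_neg_one, Real.norm_of_nonneg (inv_nonneg.2 hs.1.le)]
    exact inv_le_mul_logKernel ha (hsub hs)
  · refine ((integrableOn_logKernel_one hR1).mono_set Ioo_subset_Ioc_self).mono'
      (measurable_logKernel a).aestronglyMeasurable ?_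
    refine ae_restrict_of_forall_mem measurableSet_Ioo fun s hs => ?_
    rw [Real.norm_of_nonneg (logKernel_nonneg a hs.1.le)]
    exact logKernel_le_logKernel ha (hsub hs)

lemma integrableOn_ball_logKernel_norm_iff {E : Type*} [NormedAddCommGroup E] [NormedSpace ℝ E]
    [FiniteDimensional ℝ E] [Nontrivial E] [MeasurableSpace E] [BorelSpace E] (μ : Measure E)
    [μ.IsAddHaarMeasure] {a R : ℝ} (hR0 : 0 < R) (hR1 : R < 1) :
    IntegrableOn (fun y : E => logKernel a ‖y‖) (ball 0 R) μ ↔ a ≤ Module.finrank ℝ E := by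
  have hpolar : EqOn (fun s => s ^ (Module.finrank ℝ E - 1) • logKernel a s)
      (logKernel (a + (1 - Module.finrank ℝ E))) (Ioo 0 R) := by
    intro s hs
    dsimp only
    rw [← logKernel_div_rpow _ _ hs.1.le, ← neg_sub, Real.rpow_neg hs.1.le, div_inv_eq_mul,
      mul_comm, ← Nat.cast_pred Module.finrank_pos, Real.rpow_natCast, smul_eq_mul]
  rw [integrableOn_fun_norm_addHaar, integrableOn_congr_fun hpolar measurableSet_Ioo,
    integrableOn_Ioo_logKernel_iff hR0 hR1, ← le_sub_iff_add_le, _root_.sub_sub_cancel]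

lemma antitoneOn_indicator_Iio_logKernel {a : ℝ} (ha : 0 < a) :
    AntitoneOn ((Iio (Real.exp (-2 / a))).indicator (logKernel a)) (Ioi 0) := by
  intro s hs t ht hst
  rcases lt_or_ge t (Real.exp (-2 / a)) with htR | htR
  · have hsR := hst.trans_lt htR
    rw [indicator_of_mem (mem_Iio.2 htR), indicator_of_mem (mem_Iio.2 hsR)]
    exact antitoneOn_logKernel ha ⟨hs, hsR.le⟩ ⟨ht, htR.le⟩ hst
  · rw [indicator_of_notMem (notMem_Iio.2 htR)]
    exact indicator_apply_nonneg fun _ => logKernel_nonneg a hs.le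

end LogKernel

theorem stummel_alpha_inclusion_proper_general (n : ℕ) (hn : 1 ≤ n) (p β γ : ℝ) (hp : 0 < p)
    (hβ : 0 < β) (hγ : γ ≤ n) (f : Euc n → ℝ)
    (hf : f = fun y =>
      (Set.indicator (ball (0 : Euc n) (Real.exp (-2 / β)))
        (fun z => 1 / (‖z‖ ^ β * |Real.log ‖z‖| ^ 2)) y) ^ (1 / p)) :
    MemStummelA n p γ f ↔ β ≤ γ := by
  have : NeZero n := ⟨by omega⟩
  set R := Real.exp (-2 / β)
  have hR1 : R < 1 := Real.exp_lt_one_iff.2 (div_neg_of_neg_of_pos (by norm_num) hβ)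
  have hprofile (y : Euc n) : |f y| ^ p = (Iio R).indicator (logKernel β) ‖y‖ := by
    have h_nonneg : 0 ≤ (Iio R).indicator (logKernel β) ‖y‖ :=
      indicator_apply_nonneg fun _ => logKernel_nonneg β (norm_nonneg y)
    have hfy : f y = (Iio R).indicator (logKernel β) ‖y‖ ^ (1 / p) := by
      simp only [hf, indicator, mem_ball_zero_iff, mem_Iio, logKernel]
    rw [hfy, abs_of_nonneg (by positivity), ← Real.rpow_mul h_nonneg, one_div_mul_cancel hp.ne',
      Real.rpow_one]
  have hweight : (fun y : Euc n => (Iio R).indicator (logKernel β) ‖y‖ / ‖y‖ ^ ((n : ℝ) - γ)) =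
      (ball 0 R).indicator fun y => logKernel (β + (n - γ)) ‖y‖ := by
    ext y
    simp only [indicator, mem_ball_zero_iff, mem_Iio, ← logKernel_div_rpow _ _ (norm_nonneg y),
      ite_div, zero_div]
  rw [memStummelA_iff_locallyIntegrable_of_antitoneOn hp hγ
      (antitoneOn_indicator_Iio_logKernel hβ) hprofile, hweight,
    locallyIntegrable_indicator_ball_iff,
    integrableOn_ball_logKernel_norm_iff volume (Real.exp_pos _) hR1, finrank_euclideanSpace_fin]
  constructor <;> intro <;> linarith

/-- For `0 < α < β < n` and `B = B(0, e^{-2/β})`, the function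
`f(y) = (χ_B(y)/(|y|^β |ln|y||²))^{1/p}` belongs to `S_{p,β}(ℝ^n)` but not to `S_{p,α}(ℝ^n)`;
hence the inclusion `S_{p,α} ⊆ S_{p,β}` is proper. -/
theorem stummel_alpha_inclusion_proper (n : ℕ) (hn : 1 ≤ n) (p α β : ℝ) (hp : 1 ≤ p)
    (hα : 0 < α) (hαβ : α < β) (hβ : β < n)
    (f : Euc n → ℝ)
    (hf : f = fun y =>
      (Set.indicator (ball (0 : Euc n) (Real.exp (-2 / β)))
        (fun z => 1 / (‖z‖ ^ β * |Real.log ‖z‖| ^ 2)) y) ^ (1 / p)) :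
    MemStummelA n p β f ∧ ¬ MemStummelA n p α f := by
  have hmem {γ : ℝ} (hγ : γ ≤ n) := stummel_alpha_inclusion_proper_general n hn p β γ
    (one_pos.trans_le hp) (hα.trans hαβ) hγ f hf
  exact ⟨(hmem hβ.le).2 le_rfl, fun h => hαβ.not_ge ((hmem (hαβ.trans hβ).le).1 h)⟩
end

section
/- Let n ≥ 1, 0 < α < n, and 1 ≤ p₂ ≤ p₁ < ∞. Then S_{p₁,α}(ℝ^n) ⊆ S_{p₂,α}(ℝ^n). -/
/-!
For fixed `x` and `r`, the Stummel modulus integrates `|f|^p` against the measure with density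
`|x-y|^{α-n}` on the ball of centre `x` and radius `r`. The mass `M(r)` of that measure does not
depend on `x`, by translation invariance, and is finite because `α > 0`. Hölder's inequality
therefore gives `η_{p₂,α}f(r) ≤ η_{p₁,α}f(r) · M(r)^{1/p₂ - 1/p₁}`. Since `M(r) ≤ M(1)` for
`r ≤ 1`, decay at `0` passes from `p₁` to `p₂` along with finiteness.
-/

open MeasureTheory Metric Filter Set ENNReal

section WeightedHoelder

variable {X : Type*} [MeasurableSpace X] {μ : Measure X}

lemma lintegral_rpow_mul_le_rpow_mul_rpow {g w : X → ℝ≥0∞} (hg : AEMeasurable g μ)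
    (hw : AEMeasurable w μ) {p q : ℝ} (hp : 0 < p) (hpq : p ≤ q) :
    ∫⁻ y, g y ^ p * w y ∂μ ≤
      (∫⁻ y, g y ^ q * w y ∂μ) ^ (p / q) * (∫⁻ y, w y ∂μ) ^ (1 - p / q) := by
  have hq : 0 < q := hp.trans_le hpq
  have hθ : 0 ≤ p / q := by positivity
  have hθ' : 0 ≤ 1 - p / q := sub_nonneg.2 ((div_le_one hq).2 hpq)
  calc ∫⁻ y, g y ^ p * w y ∂μ
      = ∫⁻ y, (g y ^ q * w y) ^ (p / q) * w y ^ (1 - p / q) ∂μ := by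
        refine lintegral_congr fun y => ?_
        rw [ENNReal.mul_rpow_of_nonneg _ _ hθ, ← ENNReal.rpow_mul, mul_div_cancel₀ p hq.ne',
          mul_assoc, ← ENNReal.rpow_add_of_nonneg _ _ hθ hθ', add_sub_cancel, ENNReal.rpow_one]
    _ ≤ _ := ENNReal.lintegral_mul_norm_pow_le ((hg.pow_const q).mul hw) hw hθ hθ'
        (add_sub_cancel _ _)

lemma rpow_lintegral_rpow_mul_le {g w : X → ℝ≥0∞} (hg : AEMeasurable g μ)
    (hw : AEMeasurable w μ) {p q : ℝ} (hp : 0 < p) (hpq : p ≤ q) :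
    (∫⁻ y, g y ^ p * w y ∂μ) ^ (1 / p) ≤
      (∫⁻ y, g y ^ q * w y ∂μ) ^ (1 / q) * (∫⁻ y, w y ∂μ) ^ (1 / p - 1 / q) := by
  have hq : 0 < q := hp.trans_le hpq
  have hpow : p / q * (1 / p) = 1 / q := by field_simp
  have hpow' : (1 - p / q) * (1 / p) = 1 / p - 1 / q := by rw [sub_mul, one_mul, hpow]
  calc (∫⁻ y, g y ^ p * w y ∂μ) ^ (1 / p)
      ≤ ((∫⁻ y, g y ^ q * w y ∂μ) ^ (p / q) * (∫⁻ y, w y ∂μ) ^ (1 - p / q)) ^ (1 / p) :=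
        ENNReal.rpow_le_rpow (lintegral_rpow_mul_le_rpow_mul_rpow hg hw hp hpq) (by positivity)
    _ = _ := by
        rw [ENNReal.mul_rpow_of_nonneg _ _ (by positivity), ← ENNReal.rpow_mul,
          ← ENNReal.rpow_mul, hpow, hpow']

end WeightedHoelder

lemma locallyIntegrable_norm_rpow_of_le {X E : Type*} [TopologicalSpace X] [MeasurableSpace X]
    [NormedAddCommGroup E] {μ : Measure X} [IsLocallyFiniteMeasure μ] {f : X → E}
    (hf : AEStronglyMeasurable f μ) {p q : ℝ} (hp : 0 ≤ p) (hpq : p ≤ q)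
    (hint : LocallyIntegrable (fun y => ‖f y‖ ^ q) μ) :
    LocallyIntegrable (fun y => ‖f y‖ ^ p) μ := by
  intro x
  obtain ⟨s, hs, hfs⟩ := hint x
  obtain ⟨t, ht, hμt⟩ := μ.finiteAt_nhds x
  have : IsFiniteMeasure (μ.restrict (s ∩ t)) :=
    isFiniteMeasure_restrict.2 (measure_inter_lt_top_of_right_ne_top hμt.ne).ne
  exact ⟨s ∩ t, inter_mem hs ht, integrable_norm_rpow_of_le hf.restrict hp (hp.trans hpq) hpq
    (hfs.mono_set inter_subset_left)⟩

lemma setLIntegral_ball_comp_dist {E : Type*} [SeminormedAddCommGroup E] [MeasurableSpace E]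
    [MeasurableAdd E] (μ : Measure E) [μ.IsAddLeftInvariant] (φ : ℝ → ℝ≥0∞)
    (x : E) (r : ℝ) :
    ∫⁻ y in ball x r, φ (dist x y) ∂μ = ∫⁻ y in ball 0 r, φ ‖y‖ ∂μ := by
  simpa using ((measurePreserving_add_left μ x).setLIntegral_comp_preimage_emb
    (measurableEmbedding_addLeft x) (fun y => φ (dist x y)) (ball x r)).symm

lemma setLIntegral_ball_norm_rpow_lt_top {E : Type*} [NormedAddCommGroup E] [NormedSpace ℝ E]
    [FiniteDimensional ℝ E] [MeasurableSpace E] [BorelSpace E] (μ : Measure E)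
    [μ.IsAddHaarMeasure] (hd : 1 ≤ Module.finrank ℝ E) {s : ℝ}
    (hs : -s < Module.finrank ℝ E) (r : ℝ) :
    ∫⁻ y in ball 0 r, ENNReal.ofReal (‖y‖ ^ s) ∂μ < ⊤ := by
  have hint : IntegrableOn (fun y : E => ‖y‖ ^ s) (ball 0 r) μ := by
    refine integrableOn_ball_of_norm_le_rpow (C := 1) hd hs (ae_of_all _ fun y => ?_)
      (by fun_prop : Measurable fun y : E => ‖y‖ ^ s).aestronglyMeasurable
    rw [Real.norm_of_nonneg (by positivity), neg_neg, one_mul]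
  exact hint.lintegral_lt_top

section LocLp

variable {n : ℕ} {p q : ℝ} {f : Euc n → ℝ}

/-- `MemLocLp` does not constrain the sign of `f`, so `f` itself need not be measurable. -/
lemma MemLocLp.aemeasurable_abs (hp : p ≠ 0) (hf : MemLocLp n p f) :
    AEMeasurable (fun y => |f y|) volume := by
  have hroot := (LocallyIntegrable.aestronglyMeasurable hf).aemeasurable.pow_const p⁻¹
  simpa only [Real.rpow_rpow_inv (abs_nonneg _) hp] using hroot

lemma MemLocLp.mono_exponent (hp : 0 < p) (hpq : p ≤ q) (hf : MemLocLp n q f) :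
    MemLocLp n p f := by
  have hmeas := (hf.aemeasurable_abs (hp.trans_le hpq).ne').aestronglyMeasurable
  have hint : LocallyIntegrable (fun y => ‖|f y|‖ ^ q) volume := by
    simpa only [MemLocLp, Real.norm_eq_abs, abs_abs] using hf
  simpa only [MemLocLp, Real.norm_eq_abs, abs_abs] using
    locallyIntegrable_norm_rpow_of_le hmeas hp.le hpq hint

end LocLp

/-- The mass `M(r) = ∫_{|y|<r} |y|^{α-n} dy` that the Riesz kernel of order `α` gives to the ball
of radius `r`, without the kernel's normalizing constant. It is the constant in the comparison of
Stummel moduli of different exponents. -/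
noncomputable def rieszMass (n : ℕ) (α r : ℝ) : ℝ≥0∞ :=
  ∫⁻ y in ball (0 : Euc n) r, ENNReal.ofReal (‖y‖ ^ (α - n))

lemma rieszMass_mono (n : ℕ) (α : ℝ) : Monotone (rieszMass n α) := fun _ _ hrs =>
  lintegral_mono_set (ball_subset_ball hrs)

lemma rieszMass_lt_top {n : ℕ} (hn : 1 ≤ n) {α : ℝ} (hα : 0 < α) (r : ℝ) :
    rieszMass n α r < ⊤ :=
  setLIntegral_ball_norm_rpow_lt_top volume (by simpa using hn) (by simpa using hα) r

section Modulus

variable {n : ℕ} {p q : ℝ} {f : Euc n → ℝ}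

lemma stummelModA_eq_iSup_riesz (hp : 0 ≤ p) (α : ℝ) (f : Euc n → ℝ) (r : ℝ) :
    stummelModA n p α f r = ⨆ x : Euc n,
      (∫⁻ y in ball x r, ‖f y‖ₑ ^ p * ENNReal.ofReal (dist x y ^ (α - n))) ^ (1 / p) := by
  have hintegrand (x y : Euc n) : ENNReal.ofReal (|f y| ^ p / dist x y ^ ((n : ℝ) - α)) =
      ‖f y‖ₑ ^ p * ENNReal.ofReal (dist x y ^ (α - n)) := by
    rw [div_eq_mul_inv, ← Real.rpow_neg dist_nonneg, neg_sub, ENNReal.ofReal_mul (by positivity),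
      ← ENNReal.ofReal_rpow_of_nonneg (abs_nonneg _) hp, Real.enorm_eq_ofReal_abs]
  simp only [stummelModA, hintegrand]

lemma stummelModA_le_mul_rieszMass (hp : 0 < p) (hpq : p ≤ q) (α : ℝ)
    (hf : AEMeasurable (fun y => |f y|) volume) (r : ℝ) :
    stummelModA n p α f r ≤ stummelModA n q α f r * rieszMass n α r ^ (1 / p - 1 / q) := by
  have hf' : AEMeasurable (fun y => ‖f y‖ₑ) volume := by simpa using hf.enorm
  rw [stummelModA_eq_iSup_riesz hp.le, stummelModA_eq_iSup_riesz (hp.le.trans hpq),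
    ENNReal.iSup_mul]
  refine iSup_mono fun x => ?_
  have hmass : ∫⁻ y in ball x r, ENNReal.ofReal (dist x y ^ (α - n)) = rieszMass n α r :=
    setLIntegral_ball_comp_dist volume (fun t => ENNReal.ofReal (t ^ (α - n))) x r
  rw [← hmass]
  exact rpow_lintegral_rpow_mul_le hf'.restrict (by fun_prop) hp hpq

end Modulus

theorem stummel_alpha_p_inclusion_general {n : ℕ} (hn : 1 ≤ n) {α p₁ p₂ : ℝ} (hα : 0 < α)
    (hp₂ : 0 < p₂) (hp : p₂ ≤ p₁) {f : Euc n → ℝ} (hf : MemStummelA n p₁ α f) :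
    MemStummelA n p₂ α f := by
  obtain ⟨hloc, hfin, hlim⟩ := hf
  have hθ : 0 ≤ 1 / p₂ - 1 / p₁ := sub_nonneg.2 (one_div_le_one_div_of_le hp₂ hp)
  have hmass (r : ℝ) : rieszMass n α r ^ (1 / p₂ - 1 / p₁) < ⊤ :=
    ENNReal.rpow_lt_top_of_nonneg hθ (rieszMass_lt_top hn hα r).ne
  have hle := stummelModA_le_mul_rieszMass hp₂ hp α (hloc.aemeasurable_abs (hp₂.trans_le hp).ne')
  refine ⟨hloc.mono_exponent hp₂ hp,
    fun r hr => (hle r).trans_lt (ENNReal.mul_lt_top (hfin r hr) (hmass r)), ?_⟩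
  have hbound : ∀ᶠ r in nhdsWithin 0 (Ioi 0), stummelModA n p₂ α f r ≤
      stummelModA n p₁ α f r * rieszMass n α 1 ^ (1 / p₂ - 1 / p₁) := by
    filter_upwards [Ioo_mem_nhdsGT one_pos] with r hr
    exact (hle r).trans (by gcongr; exact rieszMass_mono n α hr.2.le)
  have hlim' := ENNReal.Tendsto.mul_const hlim (Or.inr (hmass 1).ne)
  rw [zero_mul] at hlim'
  exact tendsto_nhds_bot_mono hlim' hbound

/-- If `0 < α < n` and `1 ≤ p₂ ≤ p₁ < ∞`, then `S_{p₁,α}(ℝ^n) ⊆ S_{p₂,α}(ℝ^n)`. -/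
theorem stummel_alpha_p_inclusion (n : ℕ) (hn : 1 ≤ n) (α p₁ p₂ : ℝ)
    (hα : 0 < α) (hαn : α < n) (hp₂ : 1 ≤ p₂) (hp : p₂ ≤ p₁) :
    ∀ f : Euc n → ℝ, MemStummelA n p₁ α f → MemStummelA n p₂ α f := by
  exact fun _ => stummel_alpha_p_inclusion_general hn hα (zero_lt_one.trans_le hp₂) hp
end

section
/- Let n ≥ 1 and 1 ≤ p₂ ≤ p₁ < ∞. Suppose Ψ₂ : (0,∞) → (0,∞) is measurable, satisfies ∫₀¹ Ψ₂(t)/t dt < ∞ and the growth condition Ψ₂(r)/r^n ≤ A Ψ₂(s)/s^n for all 0 < s ≤ r (for some A > 0), and suppose there exist c > 0 and δ > 0 such that Ψ₂(t) ≤ c Ψ₁(t) for all t ∈ (0,δ). Then S_{p₁,Ψ₁}(ℝ^n) ⊆ S_{p₂,Ψ₂}(ℝ^n). -/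
open MeasureTheory Metric Filter Set ENNReal

/-!
Put `k(t) = Ψ₂(t) / t ^ n` and `g = |f| ^ p₂`. From `|f| ^ p₂ ≤ 1 + |f| ^ p₁` and `Ψ₂ ≤ c Ψ₁` one
gets, for `0 < r < δ` and uniformly in `x`,

  `∫_{B(x,r)} g(y) k(|x-y|) dy ≤ ∫_{B(0,r)} k(|y|) dy + c (η_{p₁,Ψ₁} f(r))^p₁`,

and the first term on the right is, in polar coordinates, a multiple of `∫₀^r Ψ₂(t)/t dt`. Hence the
modulus of `g` vanishes at `0`; in particular it is finite at some radius `ρ`.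

Finiteness then spreads to every radius `r` because `k` is almost decreasing: inside `B(x,ρ)` the
kernel dominates a multiple of the constant `k(ρ)`, which bounds `k(ρ) ∫_{B(x,ρ)} g` uniformly in
`x`, hence also `k(ρ) ∫_{B(x,r)} g` by a covering argument; outside `B(x,ρ)` the kernel is at most
`A k(ρ)`.
-/

open scoped Topology

lemma rpow_le_one_add_rpow {a p q : ℝ} (ha : 0 ≤ a) (hp : 0 ≤ p) (hpq : p ≤ q) :
    a ^ p ≤ 1 + a ^ q := by
  rcases le_total a 1 with h | h
  · exact (Real.rpow_le_one ha h hp).trans (le_add_of_nonneg_right (Real.rpow_nonneg ha q))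
  · exact (Real.rpow_le_rpow_of_exponent_le h hpq).trans (le_add_of_nonneg_left zero_le_one)

lemma ofReal_abs_rpow_le_one_add {a p q : ℝ} (hp : 0 ≤ p) (hpq : p ≤ q) :
    ENNReal.ofReal (|a| ^ p) ≤ 1 + ENNReal.ofReal (|a| ^ q) := by
  rw [← ENNReal.ofReal_one, ← ENNReal.ofReal_add zero_le_one (by positivity)]
  exact ENNReal.ofReal_le_ofReal (rpow_le_one_add_rpow (abs_nonneg a) hp hpq)

lemma locallyIntegrable_abs_rpow_of_le {X : Type*} [TopologicalSpace X]
    [SecondCountableTopology X] [MeasurableSpace X] {μ : Measure X} [IsLocallyFiniteMeasure μ]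
    {f : X → ℝ} {p q : ℝ} (hp : 0 < p) (hpq : p ≤ q)
    (hf : LocallyIntegrable (fun y => |f y| ^ q) μ) :
    LocallyIntegrable (fun y => |f y| ^ p) μ := by
  have hq : 0 < q := hp.trans_le hpq
  have hpow : (fun y => |f y| ^ p) = fun y => (|f y| ^ q) ^ (p / q) := by
    funext y
    rw [← Real.rpow_mul (abs_nonneg _), mul_div_cancel₀ _ hq.ne']
  have hmeas : AEStronglyMeasurable (fun y => |f y| ^ p) μ := by
    rw [hpow]
    exact (Real.continuous_rpow_const (div_pos hp hq).le).comp_aestronglyMeasurable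
      hf.aestronglyMeasurable
  refine ((locallyIntegrable_const (1 : ℝ)).add hf).mono hmeas (Eventually.of_forall fun y => ?_)
  simp only [Pi.add_apply]
  rw [Real.norm_of_nonneg (by positivity), Real.norm_of_nonneg (by positivity)]
  exact rpow_le_one_add_rpow (abs_nonneg _) hp.le hpq

lemma tendsto_setLIntegral_ball_zero {X : Type*} [MetricSpace X] [MeasurableSpace X]
    [OpensMeasurableSpace X] {μ : Measure X} [NullSingletonClass μ] {h : X → ℝ≥0∞} {x : X} {R : ℝ}
    (hR : 0 < R) (hfin : ∫⁻ y in ball x R, h y ∂μ ≠ ⊤) :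
    Tendsto (fun r => ∫⁻ y in ball x r, h y ∂μ) (𝓝[>] 0) (𝓝 0) := by
  simp only [← withDensity_apply h measurableSet_ball] at hfin ⊢
  have hlim := tendsto_measure_biInter_gt (μ := μ.withDensity h) (s := ball x) (a := 0)
    (fun _ _ => measurableSet_ball.nullMeasurableSet) (fun _ _ _ => ball_subset_ball)
    ⟨R, hR, hfin⟩
  rwa [biInter_gt_ball, closedBall_zero, measure_singleton] at hlim

/-- The modulus `sup_x ∫_{|x-y|<r} g(y) k(|x-y|) dμ(y)` of a function `g` with respect to a radial
kernel `k`; a Stummel modulus is, up to a power, the case `k(t) = Ψ(t) / t ^ n`, `g = |f| ^ p`.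
Values in `ℝ≥0∞` keep it meaningful without integrability assumptions. -/
noncomputable def kernelModulus {X : Type*} [PseudoMetricSpace X] [MeasurableSpace X]
    (μ : Measure X) (k : ℝ → ℝ≥0∞) (g : X → ℝ≥0∞) (r : ℝ) : ℝ≥0∞ :=
  ⨆ x, ∫⁻ y in ball x r, g y * k (dist x y) ∂μ

section PseudoMetricSpace

variable {X : Type*} [PseudoMetricSpace X] [MeasurableSpace X] {μ : Measure X}
  {k k' : ℝ → ℝ≥0∞} {g : X → ℝ≥0∞} {r ρ : ℝ}

lemma setLIntegral_le_kernelModulus (x : X) :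
    ∫⁻ y in ball x r, g y * k (dist x y) ∂μ ≤ kernelModulus μ k g r :=
  le_iSup (fun x => ∫⁻ y in ball x r, g y * k (dist x y) ∂μ) x

lemma kernelModulus_const_mul {c : ℝ≥0∞} (hc : c ≠ ⊤) :
    kernelModulus μ (fun t => c * k t) g r = c * kernelModulus μ k g r := by
  simp only [kernelModulus, ENNReal.mul_iSup, mul_left_comm _ c, lintegral_const_mul' c _ hc]

variable [OpensMeasurableSpace X]

lemma kernelModulus_one_add_le (hk : Measurable k) :
    kernelModulus μ k (fun y => 1 + g y) r ≤
      kernelModulus μ k (fun _ => 1) r + kernelModulus μ k g r := by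
  refine iSup_le fun x => ?_
  have hmeas : Measurable fun y => 1 * k (dist x y) :=
    (hk.comp (continuous_const.dist continuous_id).measurable).const_mul 1
  simp only [add_mul]
  rw [lintegral_add_left hmeas]
  exact add_le_add (setLIntegral_le_kernelModulus (g := fun _ => 1) x)
    (setLIntegral_le_kernelModulus x)

lemma kernelModulus_le_add_of_forall_ge (hk : ∀ t, ρ ≤ t → k t ≤ k' t) :
    kernelModulus μ k g r ≤ kernelModulus μ k g ρ + kernelModulus μ k' g r := by
  refine iSup_le fun x => ?_
  have hcover : ball x r ⊆ ball x ρ ∪ ball x r \ ball x ρ := by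
    rw [union_sdiff_self]
    exact subset_union_right
  have hfar : ∫⁻ y in ball x r \ ball x ρ, g y * k (dist x y) ∂μ ≤
      ∫⁻ y in ball x r \ ball x ρ, g y * k' (dist x y) ∂μ := by
    refine setLIntegral_mono' (measurableSet_ball.diff measurableSet_ball) fun y hy => ?_
    gcongr
    exact hk _ (not_lt.1 fun h => hy.2 (mem_ball'.2 h))
  calc ∫⁻ y in ball x r, g y * k (dist x y) ∂μ
      ≤ ∫⁻ y in ball x ρ, g y * k (dist x y) ∂μ +
          ∫⁻ y in ball x r \ ball x ρ, g y * k (dist x y) ∂μ :=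
        (lintegral_mono_set hcover).trans (lintegral_union_le _ _ _)
    _ ≤ kernelModulus μ k g ρ + kernelModulus μ k' g r :=
        add_le_add (setLIntegral_le_kernelModulus x)
          ((hfar.trans (lintegral_mono_set sdiff_subset)).trans (setLIntegral_le_kernelModulus x))

end PseudoMetricSpace

section MetricSpace

variable {X : Type*} [MetricSpace X] [MeasurableSpace X] [OpensMeasurableSpace X] {μ : Measure X}
  [NullSingletonClass μ]

lemma kernelModulus_mono {k k' : ℝ → ℝ≥0∞} {g g' : X → ℝ≥0∞} {r : ℝ}
    (hk : ∀ t ∈ Ioo 0 r, k t ≤ k' t) (hg : g ≤ g') :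
    kernelModulus μ k g r ≤ kernelModulus μ k' g' r := by
  refine iSup_mono fun x => setLIntegral_mono_ae' measurableSet_ball ?_
  filter_upwards [Measure.ae_ne μ x] with y hyx hy
  gcongr
  · exact hg y
  · exact hk _ ⟨dist_pos.2 hyx.symm, mem_ball'.1 hy⟩

lemma tendsto_kernelModulus_of_le {k₁ k₂ : ℝ → ℝ≥0∞} {g₁ g₂ : X → ℝ≥0∞} {c : ℝ≥0∞}
    {δ : ℝ} (hc : c ≠ ⊤) (hδ : 0 < δ) (hk₂ : Measurable k₂) (hk : ∀ t ∈ Ioo 0 δ, k₂ t ≤ c * k₁ t)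
    (hg : ∀ y, g₂ y ≤ 1 + g₁ y)
    (hone : Tendsto (kernelModulus μ k₂ (fun _ => 1)) (𝓝[>] 0) (𝓝 0))
    (hlim : Tendsto (kernelModulus μ k₁ g₁) (𝓝[>] 0) (𝓝 0)) :
    Tendsto (kernelModulus μ k₂ g₂) (𝓝[>] 0) (𝓝 0) := by
  have hbound : ∀ r ≤ δ, kernelModulus μ k₂ g₂ r ≤
      kernelModulus μ k₂ (fun _ => 1) r + c * kernelModulus μ k₁ g₁ r := fun r hr => calc
    kernelModulus μ k₂ g₂ r ≤ kernelModulus μ k₂ (fun y => 1 + g₁ y) r :=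
      kernelModulus_mono (fun _ _ => le_rfl) hg
    _ ≤ kernelModulus μ k₂ (fun _ => 1) r + kernelModulus μ k₂ g₁ r := kernelModulus_one_add_le hk₂
    _ ≤ kernelModulus μ k₂ (fun _ => 1) r + c * kernelModulus μ k₁ g₁ r := by
      rw [← kernelModulus_const_mul hc]
      gcongr
      exact kernelModulus_mono (fun t ht => hk t ⟨ht.1, ht.2.trans_le hr⟩) le_rfl
  have hmajorant := hone.add (ENNReal.Tendsto.const_mul hlim (.inr hc))
  rw [mul_zero, add_zero] at hmajorant
  refine tendsto_of_tendsto_of_tendsto_of_le_of_le' tendsto_const_nhds hmajorant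
    (Eventually.of_forall fun _ => zero_le) ?_
  filter_upwards [Ioo_mem_nhdsGT hδ] with r hr using hbound r hr.2.le

end MetricSpace

section SeminormedAddCommGroup

variable {E : Type*} [SeminormedAddCommGroup E] [MeasurableSpace E] {μ : Measure E}

lemma kernelModulus_one [BorelSpace E] [μ.IsAddLeftInvariant] {k : ℝ → ℝ≥0∞} {r : ℝ} :
    kernelModulus μ k (fun _ => 1) r = ∫⁻ y in ball 0 r, k ‖y‖ ∂μ := by
  have htranslate (x : E) :
      ∫⁻ y in ball x r, k (dist x y) ∂μ = ∫⁻ y in ball 0 r, k ‖y‖ ∂μ := by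
    rw [← (measurePreserving_add_left μ x).setLIntegral_comp_preimage_emb
      (measurableEmbedding_addLeft x)]
    simp [preimage_add_ball]
  simp only [kernelModulus, one_mul, htranslate, iSup_const]

/-- The number of balls of radius `ρ` needed to cover `B(x,r)` does not depend on `x`. -/
lemma kernelModulus_const_lt_top [ProperSpace E] {c : ℝ≥0∞} {g : E → ℝ≥0∞} {ρ : ℝ}
    (hρ : 0 < ρ) (h : kernelModulus μ (fun _ => c) g ρ < ⊤) (r : ℝ) :
    kernelModulus μ (fun _ => c) g r < ⊤ := by
  obtain ⟨t, -, htfin, ht⟩ := (isCompact_closedBall (0 : E) r).finite_cover_balls hρ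
  have : Fintype t := htfin.fintype
  have hcover (x : E) : ball x r ⊆ ⋃ z : t, ball (x + z) ρ := by
    intro y hy
    have hyx : y - x ∈ closedBall 0 r := mem_closedBall_zero_iff.2 (mem_ball_iff_norm.1 hy).le
    obtain ⟨z, hz, hyz⟩ := mem_iUnion₂.1 (ht hyx)
    exact mem_iUnion.2 ⟨⟨z, hz⟩, by rwa [mem_ball_iff_norm, ← sub_sub, ← mem_ball_iff_norm]⟩
  have hbound : kernelModulus μ (fun _ => c) g r ≤
      ∑ _z : t, kernelModulus μ (fun _ => c) g ρ := iSup_le fun x => calc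
    ∫⁻ y in ball x r, g y * c ∂μ ≤ ∫⁻ y in ⋃ z : t, ball (x + z) ρ, g y * c ∂μ :=
      lintegral_mono_set (hcover x)
    _ ≤ ∑ z : t, ∫⁻ y in ball (x + z) ρ, g y * c ∂μ := by
      simpa only [tsum_fintype] using lintegral_iUnion_le (fun z : t => ball (x + z) ρ) _
    _ ≤ ∑ _z : t, kernelModulus μ (fun _ => c) g ρ :=
      Finset.sum_le_sum fun z _ => setLIntegral_le_kernelModulus (k := fun _ => c) (x + z)
  exact hbound.trans_lt (ENNReal.sum_lt_top.2 fun _ _ => h)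

end SeminormedAddCommGroup

section NormedAddCommGroup

variable {E : Type*} [NormedAddCommGroup E] [MeasurableSpace E] {μ : Measure E}
  [NullSingletonClass μ] {k : ℝ → ℝ≥0∞}

lemma tendsto_kernelModulus_one [BorelSpace E] [μ.IsAddLeftInvariant] {R : ℝ}
    (hR : 0 < R) (hfin : ∫⁻ y in ball 0 R, k ‖y‖ ∂μ ≠ ⊤) :
    Tendsto (kernelModulus μ k (fun _ => 1)) (𝓝[>] 0) (𝓝 0) := by
  simpa only [funext fun r => kernelModulus_one (μ := μ) (k := k) (r := r)] using
    tendsto_setLIntegral_ball_zero hR hfin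

lemma kernelModulus_lt_top_of_almost_decreasing [ProperSpace E] [OpensMeasurableSpace E]
    {g : E → ℝ≥0∞} {A : ℝ≥0∞} {ρ : ℝ} (hA : A ≠ ⊤)
    (hk : ∀ s t, 0 < s → s ≤ t → k t ≤ A * k s)
    (hρ : 0 < ρ) (h : kernelModulus μ k g ρ < ⊤) (r : ℝ) : kernelModulus μ k g r < ⊤ := by
  have hnear : kernelModulus μ (fun _ => k ρ) g ρ < ⊤ := calc
    kernelModulus μ (fun _ => k ρ) g ρ ≤ kernelModulus μ (fun t => A * k t) g ρ :=
      kernelModulus_mono (fun t ht => hk t ρ ht.1 ht.2.le) le_rfl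
    _ = A * kernelModulus μ k g ρ := kernelModulus_const_mul hA
    _ < ⊤ := ENNReal.mul_lt_top hA.lt_top h
  calc kernelModulus μ k g r
      ≤ kernelModulus μ k g ρ + kernelModulus μ (fun _ => A * k ρ) g r :=
        kernelModulus_le_add_of_forall_ge fun t ht => hk ρ t hρ ht
    _ = kernelModulus μ k g ρ + A * kernelModulus μ (fun _ => k ρ) g r := by
        rw [kernelModulus_const_mul hA]
    _ < ⊤ := ENNReal.add_lt_top.2
        ⟨h, ENNReal.mul_lt_top hA.lt_top (kernelModulus_const_lt_top hρ hnear r)⟩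

end NormedAddCommGroup

/-- The radial kernel `Ψ(t) / t ^ n` of the Stummel modulus. Its value at `t = 0`, where the
division is junk, only concerns the centre of the ball, a null set. -/
noncomputable def stummelKernel (n : ℕ) (Ψ : ℝ → ℝ) (t : ℝ) : ℝ≥0∞ :=
  ENNReal.ofReal (Ψ t / t ^ (n : ℝ))

lemma measurable_stummelKernel (n : ℕ) {Ψ : ℝ → ℝ} (hΨ : Measurable Ψ) :
    Measurable (stummelKernel n Ψ) := by
  unfold stummelKernel
  fun_prop

lemma stummelKernel_le_mul {n : ℕ} {Ψ₁ Ψ₂ : ℝ → ℝ} {c t : ℝ} (hc : 0 ≤ c) (ht : 0 ≤ t)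
    (h : Ψ₂ t ≤ c * Ψ₁ t) :
    stummelKernel n Ψ₂ t ≤ ENNReal.ofReal c * stummelKernel n Ψ₁ t := by
  rw [stummelKernel, stummelKernel, ← ENNReal.ofReal_mul hc, ← mul_div_assoc]
  gcongr

lemma stummelKernel_almost_decreasing {n : ℕ} {Ψ : ℝ → ℝ} {A : ℝ} (hA : 0 ≤ A)
    (hΨ : ∀ s t : ℝ, 0 < s → s ≤ t → Ψ t / t ^ (n : ℝ) ≤ A * (Ψ s / s ^ (n : ℝ))) (s t : ℝ)
    (hs : 0 < s) (hst : s ≤ t) :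
    stummelKernel n Ψ t ≤ ENNReal.ofReal A * stummelKernel n Ψ s := by
  rw [stummelKernel, stummelKernel, ← ENNReal.ofReal_mul hA]
  exact ENNReal.ofReal_le_ofReal (hΨ s t hs hst)

lemma setLIntegral_stummelKernel_ne_top {E : Type*} [NormedAddCommGroup E] [NormedSpace ℝ E]
    [FiniteDimensional ℝ E] [Nontrivial E] [MeasurableSpace E] [BorelSpace E] (μ : Measure E)
    [μ.IsAddHaarMeasure] {Ψ : ℝ → ℝ} {R : ℝ}
    (hint : IntegrableOn (fun t => Ψ t / t) (Ioo 0 R)) :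
    ∫⁻ y in ball (0 : E) R, stummelKernel (Module.finrank ℝ E) Ψ ‖y‖ ∂μ ≠ ⊤ := by
  have hradial : IntegrableOn (fun y : E => Ψ ‖y‖ / ‖y‖ ^ (Module.finrank ℝ E : ℝ))
      (ball 0 R) μ := by
    rw [integrableOn_fun_norm_addHaar μ (f := fun t => Ψ t / t ^ (Module.finrank ℝ E : ℝ))]
    refine hint.congr_fun (fun t ht => ?_) measurableSet_Ioo
    have ht0 : t ≠ 0 := ht.1.ne'
    obtain ⟨m, hm⟩ := Nat.exists_eq_add_one.2 (Module.finrank_pos (R := ℝ) (M := E))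
    simp only [hm, Nat.add_sub_cancel, Real.rpow_natCast, smul_eq_mul]
    field_simp
    ring
  exact ((lintegral_mono fun y => Real.ofReal_le_enorm _).trans_lt hradial.hasFiniteIntegral).ne

section Stummel

variable {n : ℕ} {p : ℝ} {Ψ : ℝ → ℝ} {f : Euc n → ℝ}

lemma stummelMod_eq_kernelModulus_rpow (hp : 0 < p) (r : ℝ) :
    stummelMod n p Ψ f r =
      kernelModulus volume (stummelKernel n Ψ) (fun y => ENNReal.ofReal (|f y| ^ p)) r
        ^ (1 / p) := by
  have hsplit (x y : Euc n) : ENNReal.ofReal (|f y| ^ p * Ψ (dist x y) / dist x y ^ (n : ℝ)) =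
      ENNReal.ofReal (|f y| ^ p) * stummelKernel n Ψ (dist x y) := by
    rw [stummelKernel, mul_div_assoc, ENNReal.ofReal_mul (by positivity)]
  simp only [stummelMod, hsplit]
  exact ((ENNReal.orderIsoRpow (1 / p) (one_div_pos.2 hp)).map_iSup _).symm

lemma memStummel_iff_kernelModulus (hp : 0 < p) :
    MemStummel n p Ψ f ↔ MemLocLp n p f ∧
      (∀ r > 0, kernelModulus volume (stummelKernel n Ψ)
        (fun y => ENNReal.ofReal (|f y| ^ p)) r < ⊤) ∧
      Tendsto (kernelModulus volume (stummelKernel n Ψ) (fun y => ENNReal.ofReal (|f y| ^ p)))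
        (𝓝[>] 0) (𝓝 0) := by
  have hp' : 0 < 1 / p := one_div_pos.2 hp
  let e := (ENNReal.orderIsoRpow (1 / p) hp').toHomeomorph
  have hmod : stummelMod n p Ψ f = e ∘ kernelModulus volume (stummelKernel n Ψ)
      (fun y => ENNReal.ofReal (|f y| ^ p)) := funext (stummelMod_eq_kernelModulus_rpow hp)
  have he : e 0 = 0 := ENNReal.zero_rpow_of_pos hp'
  have hlim := e.isInducing.tendsto_nhds_iff (f := kernelModulus volume (stummelKernel n Ψ)
    (fun y => ENNReal.ofReal (|f y| ^ p))) (l := 𝓝[>] 0) (y := 0)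
  rw [he, ← hmod] at hlim
  simp only [MemStummel, hlim, stummelMod_eq_kernelModulus_rpow hp,
    ENNReal.rpow_lt_top_iff_of_pos hp']

end Stummel

theorem stummel_inclusion_general_general {n : ℕ} (hn : 1 ≤ n) {p₁ p₂ : ℝ}
    (hp₂ : 0 < p₂) (hp : p₂ ≤ p₁) {Ψ₁ Ψ₂ : ℝ → ℝ} (hΨ₂meas : Measurable Ψ₂)
    (hΨ₁pos : ∀ t > 0, 0 < Ψ₁ t) (hΨ₂pos : ∀ t > 0, 0 < Ψ₂ t)
    (hint : IntegrableOn (fun t => Ψ₂ t / t) (Ioo 0 1)) {A : ℝ}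
    (hgrowth : ∀ s r : ℝ, 0 < s → s ≤ r → Ψ₂ r / r ^ (n : ℝ) ≤ A * (Ψ₂ s / s ^ (n : ℝ)))
    {c δ : ℝ} (hδ : 0 < δ) (hle : ∀ t ∈ Ioo 0 δ, Ψ₂ t ≤ c * Ψ₁ t)
    {f : Euc n → ℝ} (hf : MemStummel n p₁ Ψ₁ f) : MemStummel n p₂ Ψ₂ f := by
  have : Nontrivial (Euc n) := Module.nontrivial_of_finrank_pos (R := ℝ)
    (by rwa [finrank_euclideanSpace_fin])
  have hw : 0 < Ψ₂ 1 / 1 ^ (n : ℝ) := div_pos (hΨ₂pos 1 one_pos) (by positivity)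
  have hA : 0 < A := pos_of_mul_pos_left (hw.trans_le (hgrowth 1 1 one_pos le_rfl)) hw.le
  have hc : 0 < c := pos_of_mul_pos_left
    ((hΨ₂pos _ (half_pos hδ)).trans_le (hle _ ⟨half_pos hδ, half_lt_self hδ⟩))
    (hΨ₁pos _ (half_pos hδ)).le
  have hp₁ : 0 < p₁ := hp₂.trans_le hp
  obtain ⟨hloc, -, hlim₁⟩ := (memStummel_iff_kernelModulus hp₁).1 hf
  have hweight := setLIntegral_stummelKernel_ne_top (E := Euc n) volume hint
  rw [finrank_euclideanSpace_fin] at hweight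
  have hlim₂ : Tendsto (kernelModulus volume (stummelKernel n Ψ₂)
      (fun y => ENNReal.ofReal (|f y| ^ p₂))) (𝓝[>] 0) (𝓝 0) :=
    tendsto_kernelModulus_of_le ENNReal.ofReal_ne_top hδ (measurable_stummelKernel n hΨ₂meas)
      (fun t ht => stummelKernel_le_mul hc.le ht.1.le (hle t ht))
      (fun y => ofReal_abs_rpow_le_one_add hp₂.le hp)
      (tendsto_kernelModulus_one one_pos hweight) hlim₁
  obtain ⟨ρ, hfin, hρ⟩ :=
    ((hlim₂.eventually_lt_const ENNReal.zero_lt_top).and self_mem_nhdsWithin).exists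
  exact (memStummel_iff_kernelModulus hp₂).2 ⟨locallyIntegrable_abs_rpow_of_le hp₂ hp hloc,
    fun r _ => kernelModulus_lt_top_of_almost_decreasing ENNReal.ofReal_ne_top
      (stummelKernel_almost_decreasing hA.le hgrowth) hρ hfin r, hlim₂⟩

/-- If `1 ≤ p₂ ≤ p₁ < ∞`, `Ψ₂` satisfies `∫₀¹ Ψ₂(t)/t dt < ∞` and
`Ψ₂(r)/r^n ≤ A Ψ₂(s)/s^n` for `0 < s ≤ r`, and `Ψ₂(t) ≤ c Ψ₁(t)` on `(0,δ)`, then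
`S_{p₁,Ψ₁}(ℝ^n) ⊆ S_{p₂,Ψ₂}(ℝ^n)`. -/
theorem stummel_inclusion_general (n : ℕ) (hn : 1 ≤ n) (p₁ p₂ : ℝ)
    (hp₂ : 1 ≤ p₂) (hp : p₂ ≤ p₁)
    (Ψ₁ Ψ₂ : ℝ → ℝ) (hΨ₁meas : Measurable Ψ₁) (hΨ₂meas : Measurable Ψ₂)
    (hΨ₁pos : ∀ t > 0, 0 < Ψ₁ t) (hΨ₂pos : ∀ t > 0, 0 < Ψ₂ t)
    (hint : IntegrableOn (fun t => Ψ₂ t / t) (Ioo (0 : ℝ) 1) volume)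
    (A : ℝ) (hA : 0 < A)
    (hgrowth : ∀ s r : ℝ, 0 < s → s ≤ r → Ψ₂ r / r ^ (n : ℝ) ≤ A * (Ψ₂ s / s ^ (n : ℝ)))
    (c δ : ℝ) (hc : 0 < c) (hδ : 0 < δ)
    (hle : ∀ t ∈ Ioo (0 : ℝ) δ, Ψ₂ t ≤ c * Ψ₁ t) :
    ∀ f : Euc n → ℝ, MemStummel n p₁ Ψ₁ f → MemStummel n p₂ Ψ₂ f := by
  intro f hf
  exact stummel_inclusion_general_general hn (one_pos.trans_le hp₂) hp hΨ₂meas hΨ₁pos hΨ₂pos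
    hint hgrowth hδ hle hf
end

section
/- Let n ≥ 1 and 1 ≤ p₂ < p₁ < ∞. Suppose Ψ₁ : (0,∞) → (0,∞) satisfies the doubling condition (there is A₁ > 0 with A₁⁻¹ ≤ Ψ₁(s)/Ψ₁(r) ≤ A₁ whenever 1 ≤ s/r ≤ 2), Ψ₂ : (0,∞) → (0,∞) satisfies the right-doubling condition (there is A₃ > 0 with Ψ₂(s)/Ψ₂(r) ≤ A₃ whenever 1 ≤ s/r ≤ 2), and ∫₀¹ Ψ₁(t)^{p₂} Ψ₂(t)/t dt < ∞. Then wL^{p₁,Ψ₁}(ℝ^n) ⊆ S_{p₂,Ψ₂}(ℝ^n). -/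
/-!
Kolmogorov's inequality turns weak-type control at the exponent `p₁` into the strong bound
`∫_{B(x,s)} |f|^{p₂} ≲ Ψ₁(s)^{p₂} s^n` at any `p₂ < p₁`, so weak Morrey functions of exponent `p₁`
are Morrey functions of exponent `p₂`. To estimate the Stummel modulus, split the punctured ball
`B(x,r) \ {x}` into dyadic annuli `s ≤ |x - y| < 2s`. By right-doubling of both weights each annulus
contributes
`≲ Ψ₁(2s)^{p₂} (2s)^n · Ψ₂(s) / s^n ≲ Ψ₁(s)^{p₂} Ψ₂(s) ≲ ∫_{s/2}^s Ψ₁(t)^{p₂} Ψ₂(t) dt/t`,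
and these sum to a bound by `∫_0^r Ψ₁(t)^{p₂} Ψ₂(t) dt/t` that is uniform in `x`. By right-doubling
again this integral is finite for every `r`, and it tends to `0` with `r` by absolute continuity.
-/

open MeasureTheory Metric Filter Set ENNReal

open scoped NNReal

theorem lintegral_Ioc_rpow {a τ : ℝ} (ha : -1 < a) (hτ : 0 ≤ τ) :
    ∫⁻ t in Ioc 0 τ, ENNReal.ofReal (t ^ a) = ENNReal.ofReal (τ ^ (a + 1) / (a + 1)) := by
  have hint : IntegrableOn (fun t : ℝ => t ^ a) (Ioc 0 τ) :=
    (intervalIntegrable_iff_integrableOn_Ioc_of_le hτ).1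
      (intervalIntegral.intervalIntegrable_rpow' ha)
  have hnonneg : 0 ≤ᵐ[volume.restrict (Ioc 0 τ)] fun t : ℝ => t ^ a :=
    (ae_restrict_mem measurableSet_Ioc).mono fun t ht => Real.rpow_nonneg ht.1.le a
  rw [← ofReal_integral_eq_lintegral_ofReal hint hnonneg,
    ← intervalIntegral.integral_of_le hτ, integral_rpow (Or.inl ha),
    Real.zero_rpow (by linarith), sub_zero]

theorem lintegral_Ioi_rpow {a τ : ℝ} (ha : a < -1) (hτ : 0 < τ) :
    ∫⁻ t in Ioi τ, ENNReal.ofReal (t ^ a) = ENNReal.ofReal (-τ ^ (a + 1) / (a + 1)) := by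
  have hnonneg : 0 ≤ᵐ[volume.restrict (Ioi τ)] fun t : ℝ => t ^ a :=
    (ae_restrict_mem measurableSet_Ioi).mono fun t ht => Real.rpow_nonneg (hτ.trans ht).le a
  rw [← ofReal_integral_eq_lintegral_ofReal (integrableOn_Ioi_rpow_of_lt ha hτ) hnonneg,
    integral_Ioi_rpow_of_lt ha hτ]

theorem tendsto_setLIntegral_Ioo_zero {f : ℝ → ℝ≥0∞} {a b : ℝ} (hab : a < b)
    (hf : ∫⁻ t in Ioo a b, f t ≠ ⊤) :
    Tendsto (fun r => ∫⁻ t in Ioo a r, f t) (nhdsWithin a (Ioi a)) (nhds 0) := by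
  have hvol : Tendsto (fun r => volume (Ioo a r)) (nhdsWithin a (Ioi a)) (nhds 0) := by
    have hcont : Continuous fun r => ENNReal.ofReal (r - a) :=
      ENNReal.continuous_ofReal.comp (continuous_sub_right a)
    simpa using (hcont.tendsto a).mono_left nhdsWithin_le_nhds
  have hvol_restrict : Tendsto (fun r => volume.restrict (Ioo a b) (Ioo a r))
      (nhdsWithin a (Ioi a)) (nhds 0) :=
    tendsto_of_tendsto_of_tendsto_of_le_of_le tendsto_const_nhds hvol (fun _ => zero_le)
      fun _ => Measure.restrict_apply_le _ _
  refine (tendsto_setLIntegral_zero hf hvol_restrict).congr' ?_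
  filter_upwards [Ioo_mem_nhdsGT hab] with r hr
  rw [Measure.restrict_restrict_of_subset (Ioo_subset_Ioo_right hr.2.le)]

theorem iUnion_Ico_div_two_pow {r : ℝ} (hr : 0 < r) :
    ⋃ k : ℕ, Ico (r / 2 ^ (k + 1)) (r / 2 ^ k) = Ioo 0 r := by
  ext t
  simp only [mem_iUnion, mem_Ico, mem_Ioo]
  constructor
  · rintro ⟨k, hk_le, hk_lt⟩
    exact ⟨(by positivity : 0 < r / 2 ^ (k + 1)).trans_le hk_le,
      hk_lt.trans_le (div_le_self hr.le (one_le_pow₀ one_le_two))⟩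
  · rintro ⟨ht, htr⟩
    obtain ⟨k, hk_lt, hk_le⟩ := exists_mem_Ioc_zpow (div_pos hr ht) one_lt_two
    have hk : 0 ≤ k := by
      have := (one_lt_zpow_iff_right₀ (one_lt_two (α := ℝ))).1
        (((one_lt_div ht).2 htr).trans_le hk_le)
      omega
    lift k to ℕ using hk
    exact ⟨k, (div_le_comm₀ ht (by positivity)).1 (mod_cast hk_le),
      (lt_div_comm₀ (by positivity) ht).1 (mod_cast hk_lt)⟩

theorem pairwise_disjoint_Ico_div_two_pow {r : ℝ} (hr : 0 ≤ r) :
    Pairwise (Function.onFun Disjoint fun k : ℕ => Ico (r / 2 ^ (k + 1)) (r / 2 ^ k)) := by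
  have hanti : Antitone fun k : ℕ => r / 2 ^ k := fun _ _ hkl =>
    div_le_div_of_nonneg_left hr (by positivity) (pow_le_pow_right₀ one_le_two hkl)
  exact hanti.pairwise_disjoint_on_Ico_succ

section Kolmogorov

variable {α : Type*} [MeasurableSpace α] {μ : Measure α} {f : α → ℝ} {p q τ : ℝ}

theorem setLIntegral_Ioc_meas_lt_mul_rpow_le (hp : 0 < p) (hτ : 0 ≤ τ) :
    ∫⁻ t in Ioc 0 τ, μ {x | t < f x} * ENNReal.ofReal (t ^ (p - 1)) ≤
      ENNReal.ofReal (τ ^ p / p) * μ univ := by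
  calc ∫⁻ t in Ioc 0 τ, μ {x | t < f x} * ENNReal.ofReal (t ^ (p - 1))
      ≤ ∫⁻ t in Ioc 0 τ, ENNReal.ofReal (t ^ (p - 1)) * μ univ := by
        refine lintegral_mono fun t => ?_
        rw [mul_comm]
        gcongr
        exact subset_univ _
    _ = ENNReal.ofReal (τ ^ p / p) * μ univ := by
        rw [lintegral_mul_const _ (by fun_prop), lintegral_Ioc_rpow (by linarith) hτ,
          sub_add_cancel]

theorem setLIntegral_Ioi_meas_lt_mul_rpow_le (hpq : p < q) (hτ : 0 < τ)
    (hweak : ∀ t > τ, ENNReal.ofReal t ^ q * μ {x | t < f x} ≤ ENNReal.ofReal τ ^ q * μ univ) :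
    ∫⁻ t in Ioi τ, μ {x | t < f x} * ENNReal.ofReal (t ^ (p - 1)) ≤
      ENNReal.ofReal (τ ^ p / (q - p)) * μ univ := by
  calc ∫⁻ t in Ioi τ, μ {x | t < f x} * ENNReal.ofReal (t ^ (p - 1))
      ≤ ∫⁻ t in Ioi τ, ENNReal.ofReal (t ^ (p - 1 - q)) * (ENNReal.ofReal τ ^ q * μ univ) := by
        refine setLIntegral_mono' measurableSet_Ioi fun t ht => ?_
        have ht₀ : 0 < t := hτ.trans ht
        have hsplit : ENNReal.ofReal (t ^ (p - 1)) =
            ENNReal.ofReal (t ^ (p - 1 - q)) * ENNReal.ofReal t ^ q := by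
          rw [ENNReal.ofReal_rpow_of_pos ht₀, ← ENNReal.ofReal_mul (by positivity),
            ← Real.rpow_add ht₀, sub_add_cancel]
        rw [mul_comm, hsplit, mul_assoc]
        exact mul_le_mul_right (hweak t ht) _
    _ = ENNReal.ofReal (τ ^ p / (q - p)) * μ univ := by
        rw [lintegral_mul_const _ (by fun_prop), lintegral_Ioi_rpow (by linarith) hτ,
          ENNReal.ofReal_rpow_of_pos hτ, ← mul_assoc, ← ENNReal.ofReal_mul' (by positivity),
          show p - 1 - q + 1 = -(q - p) by ring, neg_div_neg_eq, div_mul_eq_mul_div,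
          ← Real.rpow_add hτ, show -(q - p) + q = p by ring]

/-- Kolmogorov's inequality. -/
theorem lintegral_rpow_le_of_meas_lt_le (hf_nonneg : 0 ≤ᵐ[μ] f) (hf : AEMeasurable f μ)
    (hp : 0 < p) (hpq : p < q) (hτ : 0 < τ)
    (hweak : ∀ t > τ, ENNReal.ofReal t ^ q * μ {x | t < f x} ≤ ENNReal.ofReal τ ^ q * μ univ) :
    ∫⁻ x, ENNReal.ofReal (f x ^ p) ∂μ ≤
      ENNReal.ofReal (q / (q - p)) * (ENNReal.ofReal τ ^ p * μ univ) := by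
  have hqp : 0 < q - p := sub_pos.2 hpq
  calc ∫⁻ x, ENNReal.ofReal (f x ^ p) ∂μ
      = ENNReal.ofReal p *
          ∫⁻ t in Ioc 0 τ ∪ Ioi τ, μ {x | t < f x} * ENNReal.ofReal (t ^ (p - 1)) := by
        rw [lintegral_rpow_eq_lintegral_meas_lt_mul μ hf_nonneg hf hp,
          Ioc_union_Ioi_eq_Ioi hτ.le]
    _ ≤ ENNReal.ofReal p * (ENNReal.ofReal (τ ^ p / p) * μ univ +
          ENNReal.ofReal (τ ^ p / (q - p)) * μ univ) := by
        gcongr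
        exact (lintegral_union_le _ _ _).trans
          (add_le_add (setLIntegral_Ioc_meas_lt_mul_rpow_le hp hτ.le)
            (setLIntegral_Ioi_meas_lt_mul_rpow_le hpq hτ hweak))
    _ = ENNReal.ofReal (q / (q - p)) * (ENNReal.ofReal τ ^ p * μ univ) := by
        have hconst : p * (τ ^ p / p + τ ^ p / (q - p)) = q / (q - p) * τ ^ p := by
          field_simp
          ring
        rw [← add_mul, ← mul_assoc, ← ENNReal.ofReal_add (by positivity) (by positivity),
          ← ENNReal.ofReal_mul hp.le, hconst, ENNReal.ofReal_mul' (by positivity),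
          ENNReal.ofReal_rpow_of_pos hτ, mul_assoc]

end Kolmogorov

/-- A weight on the positive half-line that grows by at most the factor `A` from `r` to any point
of `[r, 2r]`. Values are taken in `[0, ∞]`, so that a real weight `Ψ` enters as `ENNReal.ofReal ∘ Ψ`
and its positivity need not be carried along; values at `t ≤ 0` are ignored. -/
def RightDoubling (A : ℝ≥0) (φ : ℝ → ℝ≥0∞) : Prop :=
  ∀ ⦃r s : ℝ⦄, 0 < r → r ≤ s → s ≤ 2 * r → φ s ≤ A * φ r

namespace RightDoubling

variable {A B : ℝ≥0} {φ ψ : ℝ → ℝ≥0∞} {r : ℝ}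

theorem ofReal_of_div_le {Ψ : ℝ → ℝ} {a : ℝ} (hΨ : ∀ t > 0, 0 < Ψ t)
    (hdbl : ∀ r s : ℝ, 0 < r → r ≤ s → s ≤ 2 * r → Ψ s / Ψ r ≤ a) :
    RightDoubling a.toNNReal (fun t => ENNReal.ofReal (Ψ t)) := by
  intro r s hr hrs hsr
  change _ ≤ ENNReal.ofReal a * _
  rw [← ENNReal.ofReal_mul' (hΨ r hr).le]
  exact ENNReal.ofReal_le_ofReal ((div_le_iff₀ (hΨ r hr)).1 (hdbl r s hr hrs hsr))

theorem mul (hφ : RightDoubling A φ) (hψ : RightDoubling B ψ) :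
    RightDoubling (A * B) (fun t => φ t * ψ t) := by
  intro r s hr hrs hsr
  rw [ENNReal.coe_mul, mul_mul_mul_comm]
  exact mul_le_mul' (hφ hr hrs hsr) (hψ hr hrs hsr)

theorem rpow_const (hφ : RightDoubling A φ) {p : ℝ} (hp : 0 ≤ p) :
    RightDoubling (A ^ p) (fun t => φ t ^ p) := by
  intro r s hr hrs hsr
  rw [ENNReal.coe_rpow_of_nonneg A hp, ← ENNReal.mul_rpow_of_nonneg _ _ hp]
  exact ENNReal.rpow_le_rpow (hφ hr hrs hsr) hp

theorem setLIntegral_Ico_div_le (hφ : RightDoubling A φ) (hr : 0 < r) :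
    ∫⁻ t in Ico r (2 * r), φ t / ENNReal.ofReal t ≤ A * φ r := by
  calc ∫⁻ t in Ico r (2 * r), φ t / ENNReal.ofReal t
      ≤ ∫⁻ _ in Ico r (2 * r), A * φ r / ENNReal.ofReal r :=
        setLIntegral_mono' measurableSet_Ico fun t ht =>
          ENNReal.div_le_div (hφ hr ht.1 ht.2.le) (ENNReal.ofReal_le_ofReal ht.1)
    _ = A * φ r := by
        rw [setLIntegral_const, Real.volume_Ico, two_mul, add_sub_cancel_right,
          ENNReal.div_mul_cancel (ENNReal.ofReal_pos.2 hr).ne' ENNReal.ofReal_ne_top]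

theorem apply_le_setLIntegral_Ico_div (hφ : RightDoubling A φ) (hr : 0 < r) :
    φ r ≤ 2 * A * ∫⁻ t in Ico (r / 2) r, φ t / ENNReal.ofReal t := by
  calc φ r = 2 * ∫⁻ _ in Ico (r / 2) r, φ r / ENNReal.ofReal r := by
        have hvol : 2 * volume (Ico (r / 2) r) = ENNReal.ofReal r := by
          rw [Real.volume_Ico, _root_.sub_half, ← ENNReal.ofReal_ofNat 2,
            ← ENNReal.ofReal_mul zero_le_two, mul_div_cancel₀ r two_ne_zero]
        rw [setLIntegral_const, mul_left_comm, hvol,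
          ENNReal.div_mul_cancel (ENNReal.ofReal_pos.2 hr).ne' ENNReal.ofReal_ne_top]
    _ ≤ 2 * ∫⁻ t in Ico (r / 2) r, A * (φ t / ENNReal.ofReal t) := by
        refine mul_le_mul_right (setLIntegral_mono' measurableSet_Ico fun t ht => ?_) _
        rw [← mul_div_assoc]
        exact ENNReal.div_le_div (hφ ((half_pos hr).trans_le ht.1) ht.2.le (by linarith [ht.1]))
          (ENNReal.ofReal_le_ofReal ht.2.le)
    _ = 2 * A * ∫⁻ t in Ico (r / 2) r, φ t / ENNReal.ofReal t := by
        rw [lintegral_const_mul' _ _ ENNReal.coe_ne_top, mul_assoc]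

theorem setLIntegral_Ioo_div_ne_top (hφ : RightDoubling A φ)
    (hint : ∫⁻ t in Ioo 0 1, φ t / ENNReal.ofReal t ≠ ⊤) (r : ℝ) :
    ∫⁻ t in Ioo 0 r, φ t / ENNReal.ofReal t ≠ ⊤ := by
  have hpow (k : ℕ) : ∫⁻ t in Ioo 0 (2 ^ k), φ t / ENNReal.ofReal t ≠ ⊤ := by
    induction k with
    | zero => rwa [pow_zero]
    | succ k ih =>
      have hpos : (0 : ℝ) < 2 ^ k := by positivity
      have hleft : ∫⁻ t in Ico (2 ^ k / 2) (2 ^ k), φ t / ENNReal.ofReal t ≠ ⊤ :=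
        ne_top_of_le_ne_top ih
          (lintegral_mono_set fun t ht => ⟨(half_pos hpos).trans_le ht.1, ht.2⟩)
      have hφ_ne_top : φ (2 ^ k) ≠ ⊤ := ne_top_of_le_ne_top
        (ENNReal.mul_ne_top (by finiteness) hleft) (hφ.apply_le_setLIntegral_Ico_div hpos)
      have hright : ∫⁻ t in Ico (2 ^ k) (2 * 2 ^ k), φ t / ENNReal.ofReal t ≠ ⊤ :=
        ne_top_of_le_ne_top (by finiteness) (hφ.setLIntegral_Ico_div_le hpos)
      rw [pow_succ', ← Ioo_union_Ico_eq_Ioo hpos (by linarith)]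
      exact ne_top_of_le_ne_top (ENNReal.add_ne_top.2 ⟨ih, hright⟩) (lintegral_union_le _ _ _)
  obtain ⟨k, hk⟩ := pow_unbounded_of_one_lt r (one_lt_two (α := ℝ))
  exact ne_top_of_le_ne_top (hpow k) (lintegral_mono_set (Ioo_subset_Ioo_right hk.le))

end RightDoubling

section Annuli

variable {X : Type*} [PseudoMetricSpace X] [MeasurableSpace X] [OpensMeasurableSpace X]
  {μ : Measure X} {g : X → ℝ≥0∞} {A B : ℝ≥0} {C : ℝ≥0∞} {φ ψ : ℝ → ℝ≥0∞} {d : ℝ} {x : X}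

theorem setLIntegral_annulus_mul_div_dist_rpow_le (hφ : RightDoubling A φ)
    (hψ : RightDoubling B ψ) (hd : 0 ≤ d) (hg : AEMeasurable g μ)
    (hball : ∀ s > 0, ∫⁻ y in ball x s, g y ∂μ ≤ C * φ s * ENNReal.ofReal s ^ d)
    {s : ℝ} (hs : 0 < s) :
    ∫⁻ y in dist x ⁻¹' Ico s (2 * s), g y * (ψ (dist x y) / ENNReal.ofReal (dist x y) ^ d) ∂μ ≤
      2 ^ d * ↑(A * B) * C * (φ s * ψ s) := by
  have hs_ne_zero : ENNReal.ofReal s ^ d ≠ 0 :=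
    (ENNReal.rpow_pos (ENNReal.ofReal_pos.2 hs) ENNReal.ofReal_ne_top).ne'
  have hs_ne_top : ENNReal.ofReal s ^ d ≠ ⊤ := ENNReal.rpow_ne_top_of_nonneg hd (by finiteness)
  have hsubset : dist x ⁻¹' Ico s (2 * s) ⊆ ball x (2 * s) := fun y hy => mem_ball'.2 hy.2
  have hmeas : MeasurableSet (dist x ⁻¹' Ico s (2 * s)) :=
    (continuous_const.dist continuous_id).measurable measurableSet_Ico
  calc ∫⁻ y in dist x ⁻¹' Ico s (2 * s), g y * (ψ (dist x y) / ENNReal.ofReal (dist x y) ^ d) ∂μ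
      ≤ ∫⁻ y in dist x ⁻¹' Ico s (2 * s), g y * (B * ψ s / ENNReal.ofReal s ^ d) ∂μ := by
        refine setLIntegral_mono' hmeas fun y hy => ?_
        gcongr
        · exact hψ hs hy.1 hy.2.le
        · exact hy.1
    _ ≤ (∫⁻ y in ball x (2 * s), g y ∂μ) * (B * ψ s / ENNReal.ofReal s ^ d) := by
        rw [← lintegral_mul_const'' _ hg.restrict]
        exact lintegral_mono_set hsubset
    _ ≤ C * (A * φ s) * ENNReal.ofReal (2 * s) ^ d * (B * ψ s / ENNReal.ofReal s ^ d) := by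
        gcongr
        refine (hball (2 * s) (by positivity)).trans ?_
        gcongr
        exact hφ hs (by linarith) le_rfl
    _ = 2 ^ d * ↑(A * B) * C * (φ s * ψ s) *
          (ENNReal.ofReal s ^ d / ENNReal.ofReal s ^ d) := by
        rw [ENNReal.ofReal_mul zero_le_two, ENNReal.mul_rpow_of_nonneg _ _ hd,
          ENNReal.ofReal_ofNat, ENNReal.coe_mul, div_eq_mul_inv, div_eq_mul_inv]
        ring
    _ = 2 ^ d * ↑(A * B) * C * (φ s * ψ s) := by
        rw [ENNReal.div_self hs_ne_zero hs_ne_top, mul_one]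

theorem setLIntegral_punctured_ball_mul_div_dist_rpow_le (hφ : RightDoubling A φ)
    (hψ : RightDoubling B ψ) (hd : 0 ≤ d) (hg : AEMeasurable g μ)
    (hball : ∀ s > 0, ∫⁻ y in ball x s, g y ∂μ ≤ C * φ s * ENNReal.ofReal s ^ d)
    {r : ℝ} (hr : 0 < r) :
    ∫⁻ y in dist x ⁻¹' Ioo 0 r, g y * (ψ (dist x y) / ENNReal.ofReal (dist x y) ^ d) ∂μ ≤
      2 ^ d * ↑(A * B) * C * (2 * ↑(A * B)) *
        ∫⁻ t in Ioo 0 r, φ t * ψ t / ENNReal.ofReal t := by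
  set F : X → ℝ≥0∞ := fun y => g y * (ψ (dist x y) / ENNReal.ofReal (dist x y) ^ d)
  set w : ℝ → ℝ≥0∞ := fun t => φ t * ψ t / ENNReal.ofReal t
  set K : ℝ≥0∞ := 2 ^ d * ↑(A * B) * C
  have hannulus (k : ℕ) : ∫⁻ y in dist x ⁻¹' Ico (r / 2 ^ (k + 1)) (r / 2 ^ k), F y ∂μ ≤
      K * (2 * ↑(A * B)) * ∫⁻ t in Ico (r / 2 / 2 ^ (k + 1)) (r / 2 / 2 ^ k), w t := by
    have hs : 0 < r / 2 ^ (k + 1) := by positivity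
    rw [div_right_comm r 2, show r / 2 / 2 ^ k = r / 2 ^ (k + 1) by rw [div_div, pow_succ'],
      show r / 2 ^ k = 2 * (r / 2 ^ (k + 1)) by field_simp; ring, mul_assoc K]
    exact (setLIntegral_annulus_mul_div_dist_rpow_le hφ hψ hd hg hball hs).trans
      (mul_le_mul_right ((hφ.mul hψ).apply_le_setLIntegral_Ico_div hs) _)
  calc ∫⁻ y in dist x ⁻¹' Ioo 0 r, F y ∂μ
      = ∫⁻ y in ⋃ k : ℕ, dist x ⁻¹' Ico (r / 2 ^ (k + 1)) (r / 2 ^ k), F y ∂μ := by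
        rw [← preimage_iUnion, iUnion_Ico_div_two_pow hr]
    _ ≤ ∑' k : ℕ, ∫⁻ y in dist x ⁻¹' Ico (r / 2 ^ (k + 1)) (r / 2 ^ k), F y ∂μ :=
        lintegral_iUnion_le _ _
    _ ≤ ∑' k : ℕ, K * (2 * ↑(A * B)) *
          ∫⁻ t in Ico (r / 2 / 2 ^ (k + 1)) (r / 2 / 2 ^ k), w t :=
        ENNReal.tsum_le_tsum hannulus
    _ = K * (2 * ↑(A * B)) * ∫⁻ t in Ioo 0 (r / 2), w t := by
        rw [ENNReal.tsum_mul_left, ← lintegral_iUnion (fun _ => measurableSet_Ico)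
          (pairwise_disjoint_Ico_div_two_pow (half_pos hr).le),
          iUnion_Ico_div_two_pow (half_pos hr)]
    _ ≤ K * (2 * ↑(A * B)) * ∫⁻ t in Ioo 0 r, w t :=
        mul_le_mul_right (lintegral_mono_set (Ioo_subset_Ioo_right (half_le_self hr.le))) _

end Annuli

section Morrey

variable {n : ℕ} {p p₁ p₂ : ℝ} {Ψ Ψ₁ Ψ₂ : ℝ → ℝ} {f : Euc n → ℝ}

theorem morreyNorm_le_iff (hp : 0 < p) (hΨ : ∀ t > 0, 0 < Ψ t) {N : ℝ≥0∞} :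
    morreyNorm n p Ψ f ≤ N ↔ ∀ (x : Euc n) (r : ℝ), 0 < r →
      ∫⁻ y in ball x r, ENNReal.ofReal (|f y| ^ p) ≤
        (N * ENNReal.ofReal (Ψ r)) ^ p * volume (ball x r) := by
  simp only [morreyNorm, iSup_le_iff]
  refine forall₃_congr fun x r hr => ?_
  have hvol_pos : volume (ball x r) ≠ 0 := (measure_ball_pos volume x hr).ne'
  have hvol_fin : volume (ball x r) ≠ ⊤ := measure_ball_lt_top.ne
  have hΨr : ENNReal.ofReal (Ψ r) ≠ 0 := (ENNReal.ofReal_pos.2 (hΨ r hr)).ne'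
  have hvol_rpow_pos : volume (ball x r) ^ (1 / p) ≠ 0 := by
    simp [ENNReal.rpow_eq_zero_iff, hvol_pos, hvol_fin]
  have hvol_rpow_fin : volume (ball x r) ^ (1 / p) ≠ ⊤ := by finiteness
  rw [ENNReal.ofReal_inv_of_pos (hΨ r hr), ENNReal.inv_rpow, mul_assoc,
    ENNReal.inv_mul_le_iff hvol_rpow_pos hvol_rpow_fin,
    ENNReal.inv_mul_le_iff hΨr ENNReal.ofReal_ne_top, ← ENNReal.rpow_le_rpow_iff hp, one_div,
    ENNReal.rpow_inv_rpow hp.ne', mul_left_comm, ENNReal.mul_rpow_of_nonneg _ _ hp.le,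
    ENNReal.rpow_inv_rpow hp.ne', mul_comm N, mul_comm (volume _)]

theorem weakMorreyNorm_le_iff (hp : 0 < p) (hΨ : ∀ t > 0, 0 < Ψ t) {N : ℝ≥0∞} :
    weakMorreyNorm n p Ψ f ≤ N ↔ ∀ (x : Euc n) (r : ℝ), 0 < r → ∀ t : ℝ, 0 < t →
      ENNReal.ofReal t ^ p * volume {y ∈ ball x r | t < |f y|} ≤
        (N * ENNReal.ofReal (Ψ r)) ^ p * volume (ball x r) := by
  simp only [weakMorreyNorm, iSup_le_iff]
  refine forall₅_congr fun x r hr t _ => ?_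
  have hvol_pos : volume (ball x r) ≠ 0 := (measure_ball_pos volume x hr).ne'
  have hvol_fin : volume (ball x r) ≠ ⊤ := measure_ball_lt_top.ne
  have hΨr : ENNReal.ofReal (Ψ r) ≠ 0 := (ENNReal.ofReal_pos.2 (hΨ r hr)).ne'
  have hvol_rpow_pos : volume (ball x r) ^ (1 / p) ≠ 0 := by
    simp [ENNReal.rpow_eq_zero_iff, hvol_pos, hvol_fin]
  have hvol_rpow_fin : volume (ball x r) ^ (1 / p) ≠ ⊤ := by finiteness
  rw [ENNReal.div_le_iff (mul_ne_zero hΨr hvol_rpow_pos) (by finiteness),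
    ← ENNReal.rpow_le_rpow_iff hp, ← mul_assoc, ENNReal.mul_rpow_of_nonneg _ _ hp.le,
    ENNReal.mul_rpow_of_nonneg _ _ hp.le, one_div, ENNReal.rpow_inv_rpow hp.ne',
    ENNReal.rpow_inv_rpow hp.ne']

theorem memLocLp_of_setLIntegral_ball_lt_top (hf : Measurable f)
    (hball : ∀ x, ∫⁻ y in ball x 1, ENNReal.ofReal (|f y| ^ p) < ⊤) : MemLocLp n p f := by
  refine fun x => ⟨ball x 1, ball_mem_nhds x one_pos, ?_, ?_⟩
  · exact (by fun_prop : Measurable fun y => |f y| ^ p).aestronglyMeasurable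
  · rw [hasFiniteIntegral_iff_ofReal (Eventually.of_forall fun y => by positivity)]
    exact hball x

theorem MemWeakMorrey.memMorrey (hf : MemWeakMorrey n p₁ Ψ f) (hp₂ : 0 < p₂) (hp : p₂ < p₁)
    (hΨ : ∀ t > 0, 0 < Ψ t) : MemMorrey n p₂ Ψ f := by
  obtain ⟨hf_meas, hf_norm⟩ := hf
  obtain ⟨M, hM_pos, hM⟩ : ∃ M : ℝ, 0 < M ∧ weakMorreyNorm n p₁ Ψ f ≤ ENNReal.ofReal M := by
    refine ⟨(weakMorreyNorm n p₁ Ψ f).toReal + 1, by positivity, ?_⟩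
    exact (ENNReal.le_ofReal_iff_toReal_le hf_norm.ne (by positivity)).2
      (le_add_of_nonneg_right zero_le_one)
  have hweak := (weakMorreyNorm_le_iff (hp₂.trans hp) hΨ).1 hM
  set N := ENNReal.ofReal (p₁ / (p₁ - p₂)) ^ p₂⁻¹ * ENNReal.ofReal M
  have hN : N ≠ ⊤ := by finiteness
  have hball (x : Euc n) (r : ℝ) (hr : 0 < r) :
      ∫⁻ y in ball x r, ENNReal.ofReal (|f y| ^ p₂) ≤
        (N * ENNReal.ofReal (Ψ r)) ^ p₂ * volume (ball x r) := by
    have hkolmogorov := lintegral_rpow_le_of_meas_lt_le (μ := volume.restrict (ball x r))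
      (Eventually.of_forall fun y => abs_nonneg (f y)) (by fun_prop) hp₂ hp
      (mul_pos hM_pos (hΨ r hr)) fun t ht => ?_
    · rwa [Measure.restrict_apply_univ, ENNReal.ofReal_mul hM_pos.le, ← mul_assoc,
        ← ENNReal.rpow_inv_rpow hp₂.ne' (ENNReal.ofReal (p₁ / (p₁ - p₂))),
        ← ENNReal.mul_rpow_of_nonneg _ _ hp₂.le, ← mul_assoc] at hkolmogorov
    · rw [Measure.restrict_apply_univ, Measure.restrict_apply
        (measurableSet_lt measurable_const (by fun_prop)), inter_comm, ENNReal.ofReal_mul hM_pos.le]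
      exact hweak x r hr t ((mul_pos hM_pos (hΨ r hr)).trans ht)
  refine ⟨memLocLp_of_setLIntegral_ball_lt_top hf_meas fun x =>
    (hball x 1 one_pos).trans_lt ?_, ((morreyNorm_le_iff hp₂ hΨ).2 hball).trans_lt hN.lt_top⟩
  exact ENNReal.mul_lt_top (by finiteness) measure_ball_lt_top

theorem stummelMod_le (hn : 1 ≤ n) (hp : 0 < p) (hf : MemLocLp n p f)
    (hΨ₁ : ∀ t > 0, 0 < Ψ₁ t) {A B : ℝ≥0}
    (hΨ₁dbl : RightDoubling A fun t => ENNReal.ofReal (Ψ₁ t))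
    (hΨ₂dbl : RightDoubling B fun t => ENNReal.ofReal (Ψ₂ t)) {r : ℝ} (hr : 0 < r) :
    stummelMod n p Ψ₂ f r ≤
      (2 ^ (n : ℝ) * ↑(A ^ p * B) * (morreyNorm n p Ψ₁ f ^ p * volume (ball (0 : Euc n) 1)) *
        (2 * ↑(A ^ p * B)) *
        ∫⁻ t in Ioo 0 r,
          ENNReal.ofReal (Ψ₁ t) ^ p * ENNReal.ofReal (Ψ₂ t) / ENNReal.ofReal t) ^ (1 / p) := by
  refine iSup_le fun x => ENNReal.rpow_le_rpow ?_ (by positivity)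
  have hball (s : ℝ) (hs : 0 < s) : ∫⁻ y in ball x s, ENNReal.ofReal (|f y| ^ p) ≤
      morreyNorm n p Ψ₁ f ^ p * volume (ball (0 : Euc n) 1) * ENNReal.ofReal (Ψ₁ s) ^ p *
        ENNReal.ofReal s ^ (n : ℝ) := by
    refine ((morreyNorm_le_iff hp hΨ₁).1 le_rfl x s hs).trans_eq ?_
    rw [Measure.addHaar_ball_of_pos volume x hs, finrank_euclideanSpace_fin,
      ENNReal.mul_rpow_of_nonneg _ _ hp.le, ENNReal.rpow_natCast, ENNReal.ofReal_pow hs.le]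
    ring
  refine le_trans ?_ (setLIntegral_punctured_ball_mul_div_dist_rpow_le (hΨ₁dbl.rpow_const hp.le)
    hΨ₂dbl n.cast_nonneg hf.aestronglyMeasurable.aemeasurable.ennreal_ofReal hball hr)
  have hmeas : MeasurableSet (dist x ⁻¹' Ioo 0 r) :=
    (continuous_const.dist continuous_id).measurable measurableSet_Ioo
  refine (setLIntegral_mono' measurableSet_ball fun y hy => ?_).trans
    ((setLIntegral_le_lintegral _ _).trans_eq (lintegral_indicator hmeas _))
  rcases (dist_nonneg : 0 ≤ dist x y).eq_or_lt with hxy | hxy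
  · -- Since `n ≠ 0`, division by zero gives the kernel the value `0` at the center `y = x`.
    simp [← hxy, Real.zero_rpow (Nat.cast_ne_zero.2 (Nat.one_le_iff_ne_zero.1 hn))]
  · rw [indicator_of_mem (show y ∈ dist x ⁻¹' Ioo 0 r from ⟨hxy, mem_ball'.1 hy⟩), mul_div_assoc,
      ENNReal.ofReal_mul (by positivity), ENNReal.ofReal_div_of_pos (by positivity),
      ENNReal.ofReal_rpow_of_pos hxy]

theorem MemMorrey.memStummel (hf : MemMorrey n p Ψ₁ f) (hn : 1 ≤ n) (hp : 0 < p)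
    (hΨ₁pos : ∀ t > 0, 0 < Ψ₁ t) (hΨ₂pos : ∀ t > 0, 0 < Ψ₂ t) {A₁ A₂ : ℝ}
    (hΨ₁dbl : ∀ r s : ℝ, 0 < r → r ≤ s → s ≤ 2 * r → Ψ₁ s / Ψ₁ r ≤ A₁)
    (hΨ₂dbl : ∀ r s : ℝ, 0 < r → r ≤ s → s ≤ 2 * r → Ψ₂ s / Ψ₂ r ≤ A₂)
    (hint : IntegrableOn (fun t => Ψ₁ t ^ p * Ψ₂ t / t) (Ioo (0 : ℝ) 1) volume) :
    MemStummel n p Ψ₂ f := by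
  obtain ⟨hf_loc, hf_norm⟩ := hf
  have hdbl₁ := RightDoubling.ofReal_of_div_le hΨ₁pos hΨ₁dbl
  have hdbl₂ := RightDoubling.ofReal_of_div_le hΨ₂pos hΨ₂dbl
  set G : ℝ → ℝ≥0∞ := fun r => ∫⁻ t in Ioo 0 r,
    ENNReal.ofReal (Ψ₁ t) ^ p * ENNReal.ofReal (Ψ₂ t) / ENNReal.ofReal t
  have hG_one : G 1 ≠ ⊤ := by
    have hG_eq : G 1 = ∫⁻ t in Ioo 0 1, ENNReal.ofReal (Ψ₁ t ^ p * Ψ₂ t / t) := by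
      refine setLIntegral_congr_fun measurableSet_Ioo fun t ht => ?_
      rw [ENNReal.ofReal_rpow_of_pos (hΨ₁pos t ht.1), ENNReal.ofReal_div_of_pos ht.1,
        ENNReal.ofReal_mul (Real.rpow_nonneg (hΨ₁pos t ht.1).le p)]
    exact hG_eq ▸ hint.lintegral_lt_top.ne
  have hG (r : ℝ) : G r ≠ ⊤ :=
    ((hdbl₁.rpow_const hp.le).mul hdbl₂).setLIntegral_Ioo_div_ne_top hG_one r
  obtain ⟨K, hK, hle⟩ : ∃ K : ℝ≥0∞, K ≠ ⊤ ∧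
      ∀ r > 0, stummelMod n p Ψ₂ f r ≤ (K * G r) ^ (1 / p) :=
    ⟨_, by finiteness, fun r hr => stummelMod_le hn hp hf_loc hΨ₁pos hdbl₁ hdbl₂ hr⟩
  refine ⟨hf_loc, fun r hr => (hle r hr).trans_lt ?_, ?_⟩
  · exact ENNReal.rpow_lt_top_of_nonneg (by positivity) (ENNReal.mul_ne_top hK (hG r))
  · have hKG : Tendsto (fun r => (K * G r) ^ (1 / p)) (nhdsWithin 0 (Ioi 0)) (nhds 0) := by
      have hG_zero : Tendsto G (nhdsWithin 0 (Ioi 0)) (nhds 0) :=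
        tendsto_setLIntegral_Ioo_zero one_pos hG_one
      have hlim := (ENNReal.Tendsto.const_mul hG_zero (Or.inr hK)).ennrpow_const (1 / p)
      rwa [mul_zero, ENNReal.zero_rpow_of_pos (by positivity)] at hlim
    exact tendsto_of_tendsto_of_tendsto_of_le_of_le' tendsto_const_nhds hKG
      (Eventually.of_forall fun _ => zero_le) (eventually_mem_nhdsWithin.mono hle)

end Morrey

theorem weak_morrey_subset_stummel_general (n : ℕ) (hn : 1 ≤ n) (p₁ p₂ : ℝ)
    (hp₂ : 0 < p₂) (hp : p₂ < p₁) (Ψ₁ Ψ₂ : ℝ → ℝ)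
    (hΨ₁pos : ∀ t > 0, 0 < Ψ₁ t) (hΨ₂pos : ∀ t > 0, 0 < Ψ₂ t) (A₁ : ℝ)
    (hΨ₁dbl : ∀ r s : ℝ, 0 < r → r ≤ s → s ≤ 2 * r → Ψ₁ s / Ψ₁ r ≤ A₁) (A₃ : ℝ)
    (hΨ₂dbl : ∀ r s : ℝ, 0 < r → r ≤ s → s ≤ 2 * r → Ψ₂ s / Ψ₂ r ≤ A₃)
    (hint : IntegrableOn (fun t => Ψ₁ t ^ p₂ * Ψ₂ t / t) (Ioo (0 : ℝ) 1) volume) :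
    ∀ f : Euc n → ℝ, MemWeakMorrey n p₁ Ψ₁ f → MemStummel n p₂ Ψ₂ f := fun _ hf =>
  (hf.memMorrey hp₂ hp hΨ₁pos).memStummel hn hp₂ hΨ₁pos hΨ₂pos hΨ₁dbl hΨ₂dbl hint

/-- If `1 ≤ p₂ < p₁ < ∞`, `Ψ₁` is doubling, `Ψ₂` is right-doubling, and
`∫₀¹ Ψ₁(t)^{p₂} Ψ₂(t)/t dt < ∞`, then `wL^{p₁,Ψ₁}(ℝ^n) ⊆ S_{p₂,Ψ₂}(ℝ^n)`. -/
theorem weak_morrey_subset_stummel (n : ℕ) (hn : 1 ≤ n) (p₁ p₂ : ℝ)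
    (hp₂ : 1 ≤ p₂) (hp : p₂ < p₁)
    (Ψ₁ Ψ₂ : ℝ → ℝ) (hΨ₁meas : Measurable Ψ₁) (hΨ₂meas : Measurable Ψ₂)
    (hΨ₁pos : ∀ t > 0, 0 < Ψ₁ t) (hΨ₂pos : ∀ t > 0, 0 < Ψ₂ t)
    (A₁ : ℝ) (hA₁ : 0 < A₁)
    (hΨ₁dbl : ∀ r s : ℝ, 0 < r → r ≤ s → s ≤ 2 * r →
      A₁⁻¹ ≤ Ψ₁ s / Ψ₁ r ∧ Ψ₁ s / Ψ₁ r ≤ A₁)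
    (A₃ : ℝ) (hA₃ : 0 < A₃)
    (hΨ₂dbl : ∀ r s : ℝ, 0 < r → r ≤ s → s ≤ 2 * r → Ψ₂ s / Ψ₂ r ≤ A₃)
    (hint : IntegrableOn (fun t => Ψ₁ t ^ p₂ * Ψ₂ t / t) (Ioo (0 : ℝ) 1) volume) :
    ∀ f : Euc n → ℝ, MemWeakMorrey n p₁ Ψ₁ f → MemStummel n p₂ Ψ₂ f :=
  weak_morrey_subset_stummel_general n hn p₁ p₂ (by linarith) hp Ψ₁ Ψ₂ hΨ₁pos hΨ₂pos
    A₁ (fun r s hr hrs hsr => (hΨ₁dbl r s hr hrs hsr).2) A₃ hΨ₂dbl hint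
end
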